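/- arXiv:math/9709223 — 2 statements merged into one kernel-verified Lean document; each statement's English description precedes it below -/
import Mathlib

section
/- Every local analytic solution of Painlevé's first equation extends to a meromorphic function on all of ℂ whose only singularities are double poles with leading coefficient 1. Precisely: if U ⊆ ℂ is a nonempty open connected set and y is analytic on U with y''(z) = 6 y(z)² + z on U, then there exists a meromorphic function Y on ℂ with Y = y on U, every singularity ẑ of Y is a pole of order exactly 2, and lim_{z→ẑ} (z−ẑ)² Y(z) = 1 at every such pole ẑ. -/
/-!
The solution is continued along balls around a base point `z₀ ∈ U`, and the only obstruction would
be that the radius of convergence of the local solutions shrinks to zero. This cannot happen because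
of a corrected energy. Along solutions (twice) the Hamiltonian, `H = p² - 4y³ - 2zy` with `p = y'`, has
derivative `-2y`, and adding `p / y` removes the unbounded part of this derivative. In `energy` the
correction is `p * conj y / (1 + |y|²)`, smooth also where `y = 0`, and
`|energy'| ≤ C (1 + |energy|)` holds along every segment free of poles (`hasDerivAt_energy`), with a
`C` that depends only on the segment. Grönwall's inequality then bounds the energy
(`energy_le_of_segment`).

A bound on the energy gives a uniform radius of meromorphic existence (`exists_local_solution`).
If `|y| ≤ 1` then `p` is bounded too and Picard iteration applies to the equation itself. If
`|y| > 1`, put `y = u⁻²`, `w = u'` and `V = H + p / y`; these satisfy a polynomial system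
(`pole_chart`) with bounded initial data, and zeros of `u` are simple with `w² = 1`, so that they
yield double poles of `y` with leading coefficient `1`.

Hence a meromorphic solution on a ball around `z₀` of radius at most `R` extends to a ball that is
larger by a fixed amount (`exists_uniform_extension`): poles are isolated, hence countable, so the
ball contains pole-free segments to points near every given boundary point, and the local solutions
at their end points are glued by the identity theorem for meromorphic solutions
(`SolvesOn.eventuallyEq`). Repeating this reaches every ball, and the same identity theorem shows
that the resulting function equals `y` on all of the connected set `U`.
-/

open Topology Filter

open ComplexConjugate

/-! ### Holomorphic differential equations -/

/-- Picard iteration for a holomorphic system `x' = F (z, x)`. The radius `r` of existence depends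
only on the bound `R` for the initial data; this uniformity is what the continuation argument
needs. The integrals of the iteration are the primitives that holomorphic functions have on balls. -/
theorem exists_holomorphic_solution {E : Type*} [NormedAddCommGroup E] [NormedSpace ℂ E]
    [FiniteDimensional ℂ E] (F : ℂ × E → E) (hF : ContDiff ℂ 1 F) (R : ℝ) :
    ∃ r > 0, ∀ (z₁ : ℂ) (x₁ : E), ‖z₁‖ ≤ R → ‖x₁‖ ≤ R →
      ∃ x : ℂ → E, x z₁ = x₁ ∧ ∀ z ∈ Metric.ball z₁ r, HasDerivAt x (F (z, x z)) z := by
  have : CompleteSpace E := FiniteDimensional.complete ℂ E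
  have : ProperSpace E := FiniteDimensional.proper ℂ E
  -- On the ball of radius `R + 1`, `F` is bounded by `M` and `L`-Lipschitz; `r` is chosen so that
  -- the Picard map preserves `‖x - x₁‖ ≤ 1` and halves sup-distances.
  set B : Set (ℂ × E) := Metric.closedBall 0 (R + 1) with hB
  have hBc : IsCompact B := isCompact_closedBall _ _
  obtain ⟨L, hL⟩ := ((hF.restrict_scalars ℝ).contDiffOn (s := B)).exists_lipschitzOnWith
    one_ne_zero (convex_closedBall _ _) hBc
  obtain ⟨M, hM⟩ := hBc.exists_bound_of_continuousOn hF.continuous.continuousOn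
  set r : ℝ := min 1 (min (1 / (|M| + 1)) (1 / (2 * (L + 1)))) with hr
  have hr0 : 0 < r := by positivity
  have hr1 : r ≤ 1 := min_le_left _ _
  have hrM : |M| * r ≤ 1 := by
    have : r ≤ 1 / (|M| + 1) := (min_le_right _ _).trans (min_le_left _ _)
    rw [le_div_iff₀ (by positivity)] at this
    nlinarith
  have hrL : L * r ≤ 1 / 2 := by
    have : r ≤ 1 / (2 * (L + 1)) := (min_le_right _ _).trans (min_le_right _ _)
    rw [le_div_iff₀ (by positivity)] at this
    nlinarith
  refine ⟨r, hr0, fun z₁ x₁ hz₁ hx₁ => ?_⟩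
  set D := Metric.ball z₁ r with hD
  have hDo : IsOpen D := Metric.isOpen_ball
  have hz₁D : z₁ ∈ D := Metric.mem_ball_self hr0
  have hmem : ∀ z ∈ D, ∀ v : E, ‖v - x₁‖ ≤ 1 → (z, v) ∈ B := by
    intro z hz v hv
    rw [hB, mem_closedBall_zero_iff, Prod.norm_mk]
    rw [hD, mem_ball_iff_norm] at hz
    refine max_le ?_ ?_
    · linarith [norm_le_norm_add_norm_sub' z z₁]
    · linarith [norm_le_norm_add_norm_sub' v x₁]
  let S := {x : ℂ → E // DifferentiableOn ℂ x D ∧ x z₁ = x₁ ∧ ∀ z ∈ D, ‖x z - x₁‖ ≤ 1}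
  have hT : ∀ x : S, ∃ x' : S, ∀ z ∈ D, HasDerivAt x'.1 (F (z, x.1 z)) z := by
    rintro ⟨x, hxd, hx0, hxb⟩
    have hd : DifferentiableOn ℂ (fun z => F (z, x z)) D :=
      (hF.differentiable one_ne_zero).comp_differentiableOn (differentiableOn_id.prodMk hxd)
    obtain ⟨g, hg0, hg⟩ := (DifferentiableOn.isExactOn_ball hd).with_val_at z₁ x₁
    refine ⟨⟨g, fun z hz => (hg z hz).differentiableAt.differentiableWithinAt, hg0, ?_⟩, hg⟩
    intro z hz
    have := (convex_ball z₁ r).norm_image_sub_le_of_norm_hasDerivWithin_le (f := g)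
      (C := |M|) (fun w hw => (hg w hw).hasDerivWithinAt)
      (fun w hw => (hM _ (hmem w hw _ (hxb w hw))).trans (le_abs_self M)) hz₁D hz
    rw [hg0] at this
    refine this.trans (le_trans ?_ hrM)
    gcongr
    exact (mem_ball_iff_norm.1 hz).le
  choose T hTd using hT
  let s : ℕ → S := fun n => T^[n] ⟨fun _ => x₁, differentiableOn_const _, rfl, by simp⟩
  have hs : ∀ n, s (n + 1) = T (s n) := fun n => Function.iterate_succ_apply' _ _ _
  have hcontr : ∀ n, ∀ z ∈ D, ‖(s (n + 1)).1 z - (s n).1 z‖ ≤ 1 * (1 / 2) ^ n := by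
    intro n
    induction n with
    | zero =>
      intro z hz
      have h0 : (s 0).1 z = x₁ := rfl
      simpa [h0] using (s 1).2.2.2 z hz
    | succ n ih =>
      intro z hz
      have hder : ∀ w ∈ D, HasDerivWithinAt (fun w => (s (n + 2)).1 w - (s (n + 1)).1 w)
          (F (w, (s (n + 1)).1 w) - F (w, (s n).1 w)) D w := by
        intro w hw
        rw [hs (n + 1), hs n]
        have h1 := hTd (s (n + 1)) w hw
        have h2 := hTd (s n) w hw
        rw [hs n] at h1
        exact (h1.sub h2).hasDerivWithinAt
      have := (convex_ball z₁ r).norm_image_sub_le_of_norm_hasDerivWithin_le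
        (C := L * (1 * (1 / 2) ^ n)) hder (fun w hw => by
          refine (hL.norm_sub_le (hmem w hw _ ((s (n + 1)).2.2.2 w hw))
            (hmem w hw _ ((s n).2.2.2 w hw))).trans ?_
          gcongr
          simpa [Prod.norm_def] using ih w hw) hz₁D hz
      simp only [(s _).2.2.1, sub_self, sub_zero] at this
      refine this.trans ?_
      have h3 : ‖z - z₁‖ ≤ r := (mem_ball_iff_norm.1 hz).le
      calc L * (1 * (1 / 2) ^ n) * ‖z - z₁‖ ≤ L * (1 * (1 / 2) ^ n) * r := by gcongr
        _ = (L * r) * (1 / 2) ^ n := by ring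
        _ ≤ (1 / 2) * (1 / 2) ^ n := by gcongr
        _ = 1 * (1 / 2) ^ (n + 1) := by ring
  have hcontr' : ∀ z ∈ D, ∀ n, dist ((s n).1 z) ((s (n + 1)).1 z) ≤ 1 * (1 / 2) ^ n := by
    intro z hz n
    rw [dist_comm, dist_eq_norm]
    exact hcontr n z hz
  have hlim : ∀ z, ∃ l, z ∈ D → Tendsto (fun n => (s n).1 z) atTop (𝓝 l) := by
    intro z
    by_cases hz : z ∈ D
    · obtain ⟨l, hl⟩ := cauchySeq_tendsto_of_complete
        (cauchySeq_of_le_geometric (1 / 2) 1 (by norm_num) (hcontr' z hz))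
      exact ⟨l, fun _ => hl⟩
    · exact ⟨0, fun h => absurd h hz⟩
  choose x hx using hlim
  have hunif : TendstoUniformlyOn (fun n => (s n).1) x atTop D := by
    rw [Metric.tendstoUniformlyOn_iff]
    intro ε hε
    have h0 : Tendsto (fun n : ℕ => 1 * (1 / 2 : ℝ) ^ n / (1 - 1 / 2)) atTop (𝓝 0) := by
      have := (tendsto_pow_atTop_nhds_zero_of_lt_one (r := (1 / 2 : ℝ)) (by norm_num)
        (by norm_num)).const_mul 2
      simp only [mul_zero] at this
      refine this.congr fun n => by ring
    filter_upwards [h0.eventually_lt_const hε] with n hn z hz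
    rw [dist_comm]
    exact (dist_le_of_le_geometric_of_tendsto (1 / 2) 1 (by norm_num) (hcontr' z hz) (hx z hz)
      n).trans_lt hn
  have hloc := hunif.tendstoLocallyUniformlyOn
  have hdiff : ∀ᶠ n in atTop, DifferentiableOn ℂ (s n).1 D :=
    Eventually.of_forall fun n => (s n).2.1
  have hxd := hloc.differentiableOn hdiff hDo
  refine ⟨x, ?_, fun z hz => ?_⟩
  · refine tendsto_nhds_unique (hx z₁ hz₁D) ?_
    simp only [(s _).2.2.1]
    exact tendsto_const_nhds
  · have h1 := ((hloc.deriv hdiff hDo).tendsto_at hz).comp (tendsto_add_atTop_nat 1)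
    have h2 : Tendsto (fun n => F (z, (s n).1 z)) atTop (𝓝 (F (z, x z))) :=
      (hF.continuous.tendsto _).comp (tendsto_const_nhds.prodMk_nhds (hx z hz))
    have h3 : deriv x z = F (z, x z) := by
      refine tendsto_nhds_unique h1 (h2.congr fun n => ?_)
      simp only [Function.comp_apply]
      rw [hs n, (hTd (s n) z hz).deriv]
    rw [← h3]
    exact (hxd.differentiableAt (hDo.mem_nhds hz)).hasDerivAt

/-! ### Meromorphic solutions and their uniqueness -/

/-- Grönwall's lemma along the radii of a small ball: a holomorphic function with `‖f'‖ ≤ K * ‖f‖`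
near one of its zeros vanishes near that zero. -/
theorem eventually_eq_zero_of_norm_deriv_le {E : Type*} [NormedAddCommGroup E] [NormedSpace ℂ E]
    {f f' : ℂ → E} {z₁ : ℂ} {K : ℝ}
    (hf : ∀ᶠ z in 𝓝 z₁, HasDerivAt f (f' z) z ∧ ‖f' z‖ ≤ K * ‖f z‖) (h0 : f z₁ = 0) :
    ∀ᶠ z in 𝓝 z₁, f z = 0 := by
  obtain ⟨ε, hε, hball⟩ := Metric.eventually_nhds_iff_ball.1 hf
  refine Metric.eventually_nhds_iff_ball.2 ⟨ε, hε, fun a ha => ?_⟩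
  have hmem : ∀ t ∈ Set.Icc (0 : ℝ) 1, z₁ + t * (a - z₁) ∈ Metric.ball z₁ ε := by
    intro t ht
    have := (convex_ball z₁ ε).add_smul_sub_mem (Metric.mem_ball_self hε) ha ht
    simpa using this
  have hline : ∀ t : ℝ, HasDerivAt (fun t : ℝ => z₁ + t * (a - z₁)) (a - z₁) t := by
    intro t
    simpa using ((Complex.ofRealCLM.hasDerivAt (x := t)).mul_const (a - z₁)).const_add z₁
  have hder : ∀ t ∈ Set.Icc (0 : ℝ) 1, HasDerivAt (fun t : ℝ => f (z₁ + t * (a - z₁)))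
      ((a - z₁) • f' (z₁ + t * (a - z₁))) t := fun t ht =>
    ((hball _ (hmem t ht)).1).scomp t (hline t)
  have := eq_zero_of_abs_deriv_le_mul_abs_self_of_eq_zero_right (K := ‖a - z₁‖ * K)
    (fun t ht => (hder t ht).continuousAt.continuousWithinAt)
    (fun t ht => (hder t ⟨ht.1, ht.2.le⟩).hasDerivWithinAt) (by simpa using h0)
    (fun t ht => by
      rw [norm_smul, mul_assoc]
      gcongr
      exact (hball _ (hmem t ⟨ht.1, ht.2.le⟩)).2) 1 (by simp)
  simpa using this

/-- `Y` is analytic and solves the first Painlevé equation in a neighbourhood of `z`. -/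
def RegularAt (Y : ℂ → ℂ) (z : ℂ) : Prop :=
  ∀ᶠ w in 𝓝 z, AnalyticAt ℂ Y w ∧ deriv (deriv Y) w = 6 * (Y w) ^ 2 + w

/-- `Y` has a double pole with leading coefficient `1` at `z`, and solves the equation at all
nearby points. The value at the pole is normalised to `0` (that of `1 / 0`), so that two solutions
agreeing near a pole agree at the pole too. Meromorphy is implied by the other clauses; including
it gives direct access to the identity theorem for meromorphic functions. -/
def DoublePoleAt (Y : ℂ → ℂ) (z : ℂ) : Prop :=
  MeromorphicAt Y z ∧ Y z = 0 ∧ Tendsto (fun w => (w - z) ^ 2 * Y w) (𝓝[≠] z) (𝓝 1) ∧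
    ∀ᶠ w in 𝓝[≠] z, RegularAt Y w

/-- `Y` is a meromorphic solution near `z`: either regular or with a normalised double pole. -/
def SolvesAt (Y : ℂ → ℂ) (z : ℂ) : Prop :=
  RegularAt Y z ∨ DoublePoleAt Y z

/-- `Y` is a meromorphic solution at every point of `D`. -/
def SolvesOn (Y : ℂ → ℂ) (D : Set ℂ) : Prop :=
  ∀ z ∈ D, SolvesAt Y z

theorem SolvesOn.mono {Y : ℂ → ℂ} {D D' : Set ℂ} (h : SolvesOn Y D') (hD : D ⊆ D') :
    SolvesOn Y D :=
  fun z hz => h z (hD hz)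

theorem RegularAt.analyticAt {Y : ℂ → ℂ} {z : ℂ} (h : RegularAt Y z) : AnalyticAt ℂ Y z :=
  h.self_of_nhds.1

theorem RegularAt.congr {Y Y' : ℂ → ℂ} {z : ℂ} (h : RegularAt Y z) (he : Y =ᶠ[𝓝 z] Y') :
    RegularAt Y' z := by
  filter_upwards [h, he.eventually_nhds] with w hw hew'
  have hew : Y =ᶠ[𝓝 w] Y' := hew'
  exact ⟨hw.1.congr hew, by rw [← hew.deriv.deriv_eq, ← hew.eq_of_nhds]; exact hw.2⟩

theorem DoublePoleAt.congr {Y Y' : ℂ → ℂ} {z : ℂ} (h : DoublePoleAt Y z) (he : Y =ᶠ[𝓝 z] Y') :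
    DoublePoleAt Y' z := by
  obtain ⟨h1, h2, h3, h4⟩ := h
  have he' : Y =ᶠ[𝓝[≠] z] Y' := he.filter_mono nhdsWithin_le_nhds
  refine ⟨h1.congr he', he.eq_of_nhds ▸ h2, h3.congr' ?_, ?_⟩
  · filter_upwards [he'] with w hw
    rw [hw]
  · filter_upwards [h4, he.eventually_nhds.filter_mono nhdsWithin_le_nhds] with w hw hew
    exact hw.congr hew

theorem RegularAt.not_tendsto_one {Y : ℂ → ℂ} {z : ℂ} (h : RegularAt Y z) :
    ¬ Tendsto (fun w => (w - z) ^ 2 * Y w) (𝓝[≠] z) (𝓝 1) := by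
  intro h1
  have h2 : Tendsto (fun w => (w - z) ^ 2 * Y w) (𝓝[≠] z) (𝓝 ((z - z) ^ 2 * Y z)) :=
    Tendsto.mono_left (((continuousAt_id.sub continuousAt_const).pow 2).mul
      h.analyticAt.continuousAt) nhdsWithin_le_nhds
  have := tendsto_nhds_unique h1 h2
  simp at this

/-- Local uniqueness for the initial value problem. -/
theorem eventuallyEq_of_initial_eq {Y₁ Y₂ : ℂ → ℂ} {z₁ : ℂ} (h₁ : RegularAt Y₁ z₁)
    (h₂ : RegularAt Y₂ z₁) (h0 : Y₁ z₁ = Y₂ z₁) (h0' : deriv Y₁ z₁ = deriv Y₂ z₁) :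
    Y₁ =ᶠ[𝓝 z₁] Y₂ := by
  set K : ℝ := max 1 (6 * (‖Y₁ z₁ + Y₂ z₁‖ + 1)) with hK
  have hbd : ∀ᶠ z in 𝓝 z₁, ‖Y₁ z + Y₂ z‖ < ‖Y₁ z₁ + Y₂ z₁‖ + 1 :=
    ((h₁.analyticAt.continuousAt.add h₂.analyticAt.continuousAt).norm).eventually_lt_const
      (lt_add_one _)
  have := eventually_eq_zero_of_norm_deriv_le (z₁ := z₁) (K := K)
    (f := fun z => (Y₁ z - Y₂ z, deriv Y₁ z - deriv Y₂ z))
    (f' := fun z => (deriv Y₁ z - deriv Y₂ z, deriv (deriv Y₁) z - deriv (deriv Y₂) z)) (by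
      filter_upwards [h₁, h₂, hbd] with z hz₁ hz₂ hz
      refine ⟨(hz₁.1.differentiableAt.hasDerivAt.sub hz₂.1.differentiableAt.hasDerivAt).prodMk
        (hz₁.1.deriv.differentiableAt.hasDerivAt.sub hz₂.1.deriv.differentiableAt.hasDerivAt), ?_⟩
      have e : deriv (deriv Y₁) z - deriv (deriv Y₂) z = 6 * (Y₁ z + Y₂ z) * (Y₁ z - Y₂ z) := by
        rw [hz₁.2, hz₂.2]; ring
      rw [e, Prod.norm_mk, Prod.norm_mk, max_le_iff]
      set m := max ‖Y₁ z - Y₂ z‖ ‖deriv Y₁ z - deriv Y₂ z‖ with hm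
      have hm0 : 0 ≤ m := (norm_nonneg _).trans (le_max_left _ _)
      constructor
      · calc _ ≤ m := le_max_right _ _
          _ ≤ K * m := le_mul_of_one_le_left hm0 (le_max_left _ _)
      · rw [norm_mul, norm_mul, Complex.norm_ofNat]
        refine mul_le_mul ?_ (le_max_left _ _) (norm_nonneg _) (zero_le_one.trans (le_max_left _ _))
        exact (by gcongr : 6 * ‖Y₁ z + Y₂ z‖ ≤ _).trans (le_max_right _ _)) (by simp [h0, h0'])
  filter_upwards [this] with z hz
  exact sub_eq_zero.1 (Prod.ext_iff.1 hz).1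

theorem SolvesAt.eventually_regularAt {Y : ℂ → ℂ} {z : ℂ}
    (h : SolvesAt Y z) : ∀ᶠ w in 𝓝[≠] z, RegularAt Y w :=
  h.elim (fun h => (eventually_eventually_nhds.2 h).filter_mono nhdsWithin_le_nhds)
    fun h => h.2.2.2

theorem SolvesAt.meromorphicAt {Y : ℂ → ℂ} {z : ℂ}
    (h : SolvesAt Y z) : MeromorphicAt Y z :=
  h.elim (fun h => h.analyticAt.meromorphicAt) fun h => h.1

theorem eventuallyEq_of_punctured {Y₁ Y₂ : ℂ → ℂ} {z : ℂ}
    (h₁ : SolvesAt Y₁ z) (h₂ : SolvesAt Y₂ z)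
    (he : Y₁ =ᶠ[𝓝[≠] z] Y₂) : Y₁ =ᶠ[𝓝 z] Y₂ := by
  suffices h : Y₁ z = Y₂ z from eventuallyEq_nhds_of_eventuallyEq_nhdsNE he h
  rcases h₁ with h₁ | h₁ <;> rcases h₂ with h₂ | h₂
  · exact tendsto_nhds_unique
      (h₁.analyticAt.continuousAt.tendsto.mono_left nhdsWithin_le_nhds)
      ((h₂.analyticAt.continuousAt.tendsto.mono_left nhdsWithin_le_nhds).congr' he.symm)
  · exact absurd (h₂.2.2.1.congr' (by filter_upwards [he] with w hw; rw [hw])) h₁.not_tendsto_one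
  · exact absurd (h₁.2.2.1.congr' (by filter_upwards [he] with w hw; rw [hw])) h₂.not_tendsto_one
  · rw [h₁.2.1, h₂.2.1]

theorem SolvesAt.congr {Y Y' : ℂ → ℂ} {z : ℂ} (h : SolvesAt Y z) (he : Y =ᶠ[𝓝 z] Y') :
    SolvesAt Y' z :=
  h.imp (fun h => h.congr he) fun h => h.congr he

/-- The identity theorem for meromorphic solutions: on a preconnected set, two solutions whose
germs agree at one point agree everywhere, values at the poles included. -/
theorem SolvesOn.eventuallyEq {Y₁ Y₂ : ℂ → ℂ} {D : Set ℂ} (hD : IsPreconnected D)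
    (h₁ : SolvesOn Y₁ D) (h₂ : SolvesOn Y₂ D) {z₁ : ℂ} (hz₁ : z₁ ∈ D) (he : Y₁ =ᶠ[𝓝 z₁] Y₂) :
    ∀ z ∈ D, Y₁ =ᶠ[𝓝 z] Y₂ := by
  have hsub : D ⊆ {z | Y₁ =ᶠ[𝓝 z] Y₂} := by
    refine hD.subset_of_closure_inter_subset isOpen_setOfPred_eventually_nhds ⟨z₁, hz₁, he⟩ ?_
    rintro z ⟨hzc, hz⟩
    refine eventuallyEq_of_punctured (h₁ z hz) (h₂ z hz) ?_
    rw [← (SolvesAt.meromorphicAt (h₁ z hz)).frequently_eq_iff_eventuallyEq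
      (SolvesAt.meromorphicAt (h₂ z hz))]
    -- otherwise the two solutions differ at all points near `z`, among them points at which
    -- their germs agree
    by_contra hcon
    rw [not_frequently] at hcon
    have hcon' := hcon
    rw [eventually_nhdsWithin_iff] at hcon'
    obtain ⟨w, hw1, hw2⟩ := mem_closure_iff_frequently.1 hzc |>.and_eventually
      (eventually_eventually_nhds.2 hcon') |>.exists
    -- a neighbourhood of `w` contains a point other than `z`
    have h3 := (hw1.and hw2).filter_mono (nhdsWithin_le_nhds (s := {z}ᶜ))
    have h4 : (𝓝[{z}ᶜ] w).NeBot := by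
      rw [← mem_closure_iff_nhdsWithin_neBot, closure_compl_singleton]
      trivial
    obtain ⟨v, ⟨hv1, hv2⟩, hv3⟩ := (h3.and self_mem_nhdsWithin).exists
    exact hv2 hv3 hv1
  exact hsub

/-! ### The corrected energy -/

/-- Twice the Hamiltonian, `p² - 4y³ - 2zy`, plus a smooth variant of `p / y`.
Along solutions the former has derivative `-2y`, which it does not control
near a pole; the derivative of `p / y` cancels the unbounded part. Writing `conj y / (1 + |y|²)` in
place of `1 / y` makes the correction smooth at the zeros of `y`, at the price of holomorphy, which
plays no role since `energy` is only differentiated along real segments. -/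
noncomputable def energy (z y p : ℂ) : ℂ :=
  p ^ 2 - 4 * y ^ 3 - 2 * z * y + p * conj y / (1 + y * conj y)

theorem one_add_mul_conj (y : ℂ) : 1 + y * conj y = ((1 + ‖y‖ ^ 2 : ℝ) : ℂ) := by
  rw [Complex.mul_conj, Complex.normSq_eq_norm_sq]; push_cast; rfl

theorem norm_one_add_mul_conj (y : ℂ) : ‖1 + y * conj y‖ = 1 + ‖y‖ ^ 2 := by
  rw [one_add_mul_conj, Complex.norm_real, Real.norm_of_nonneg (by positivity)]

theorem one_add_mul_conj_ne_zero (y : ℂ) : 1 + y * conj y ≠ 0 := by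
  rw [← norm_ne_zero_iff, norm_one_add_mul_conj]; positivity

/-- The energy controls `p` in terms of `y`, with the growth `|p| = O(|y| ^ 2)`. -/
theorem norm_sq_le_of_energy (z y p : ℂ) :
    ‖p‖ ^ 2 ≤ (5 + 2 * ‖z‖ + 2 * ‖energy z y p‖) * (1 + ‖y‖ ^ 2) ^ 2 := by
  have e : p ^ 2 = energy z y p + 4 * y ^ 3 + 2 * z * y - p * conj y / (1 + y * conj y) := by
    rw [energy]; ring
  have h1 : ‖p‖ ^ 2 ≤ ‖energy z y p‖ + 4 * ‖y‖ ^ 3 + 2 * ‖z‖ * ‖y‖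
      + ‖p‖ * (‖y‖ / (1 + ‖y‖ ^ 2)) := by
    rw [← norm_pow, e]
    refine (norm_sub_le _ _).trans (add_le_add ((norm_add₃_le).trans ?_) ?_)
    · simp
    · rw [norm_div, norm_mul, norm_one_add_mul_conj, RCLike.norm_conj, mul_div_assoc]
  set s := ‖y‖ with hs
  have hs0 : 0 ≤ s := norm_nonneg _
  have hsq : s ≤ (1 + s ^ 2) / 2 := by nlinarith [sq_nonneg (s - 1)]
  have h2 : s / (1 + s ^ 2) ≤ 1 / 2 := by
    rw [div_le_iff₀ (by positivity)]; linarith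
  have h3 : ‖p‖ * (s / (1 + s ^ 2)) ≤ ‖p‖ ^ 2 / 2 + 1 / 8 := by
    have : ‖p‖ * (s / (1 + s ^ 2)) ≤ ‖p‖ * (1 / 2) := by gcongr
    nlinarith [sq_nonneg (‖p‖ - 1 / 2)]
  have h4 : 4 * s ^ 3 ≤ 2 * (1 + s ^ 2) ^ 2 := by
    nlinarith [mul_le_mul hsq (by linarith : s ^ 2 ≤ 1 + s ^ 2) (by positivity) (by positivity)]
  have hq : 1 ≤ (1 + s ^ 2) ^ 2 := by nlinarith [sq_nonneg s, sq_nonneg (s ^ 2)]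
  have h5 : s ≤ (1 + s ^ 2) ^ 2 / 2 := by nlinarith [sq_nonneg s, sq_nonneg (s ^ 2)]
  have h6 : 2 * ‖z‖ * s ≤ ‖z‖ * (1 + s ^ 2) ^ 2 := by
    have := mul_le_mul_of_nonneg_left h5 (norm_nonneg z); linarith
  have h7 : ‖energy z y p‖ ≤ ‖energy z y p‖ * (1 + s ^ 2) ^ 2 :=
    le_mul_of_one_le_right (norm_nonneg _) hq
  nlinarith

/-- Along a segment with direction `c`, the energy of a solution satisfies a linear differential
inequality whose coefficients do not depend on the solution. -/
theorem hasDerivAt_energy {z y p : ℝ → ℂ} {c : ℂ} {t : ℝ} (hz : HasDerivAt z c t)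
    (hy : HasDerivAt y (c * p t) t) (hp : HasDerivAt p (c * (6 * y t ^ 2 + z t)) t) :
    ∃ D, HasDerivAt (fun t => energy (z t) (y t) (p t)) D t ∧
      ‖D‖ ≤ ‖c‖ * (12 + 6 * ‖z t‖) + ‖c‖ * 5 * ‖energy (z t) (y t) (p t)‖ := by
  have hyc : HasDerivAt (fun t => conj (y t)) (conj (c * p t)) t := hy.star
  have hne := one_add_mul_conj_ne_zero (y t)
  have key := ((((hp.pow 2).sub ((hy.pow 3).const_mul 4)).sub ((hz.const_mul 2).mul hy)).add
    ((hp.mul hyc).div ((hy.mul hyc).const_add 1) hne))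
  refine ⟨_, key, ?_⟩
  set E := energy (z t) (y t) (p t) with hE
  have hpE : p t ^ 2 = E + 4 * y t ^ 3 + 2 * z t * y t
      - p t * conj (y t) / (1 + y t * conj (y t)) := by
    rw [hE, energy]; ring
  have hp2 := norm_sq_le_of_energy (z t) (y t) (p t)
  rw [← hE] at hp2
  -- The derivative after `p ^ 2` has been replaced using `hpE`; every summand is bounded, or linear
  -- in the energy.
  have hD : ∀ D, D = c * (2 * y t * (y t * conj (y t) - 1) / (1 + y t * conj (y t)) ^ 2
      + z t * conj (y t) / (1 + y t * conj (y t))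
      + -(2 * z t * y t * conj (y t) ^ 2 / (1 + y t * conj (y t)) ^ 2)
      + -(E * conj (y t) ^ 2 / (1 + y t * conj (y t)) ^ 2)
      + p t * conj (y t) ^ 3 / (1 + y t * conj (y t)) ^ 3)
      + conj c * (p t * conj (p t) / (1 + y t * conj (y t)) ^ 2) →
      ‖D‖ ≤ ‖c‖ * (12 + 6 * ‖z t‖) + ‖c‖ * 5 * ‖E‖ := by
    rintro D rfl
    set s := ‖y t‖ with hs
    have hs0 : 0 ≤ s := norm_nonneg _
    set n := 1 + s ^ 2 with hn
    have hn1 : 1 ≤ n := by nlinarith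
    have hn0 : 0 < n := by linarith
    have hsn : s ≤ n / 2 := by nlinarith [sq_nonneg (s - 1)]
    have hs2n : s ^ 2 ≤ n := by linarith
    have hs3n : s ^ 3 ≤ n ^ 2 / 2 := by
      calc s ^ 3 = s * s ^ 2 := by ring
        _ ≤ n / 2 * n := by gcongr
        _ = _ := by ring
    have hP : (‖p t‖ / n) ^ 2 ≤ 5 + 2 * ‖z t‖ + 2 * ‖E‖ := by
      rw [div_pow, div_le_iff₀ (by positivity)]; exact hp2
    have hyc' : ‖conj (y t)‖ = s := RCLike.norm_conj _
    have b1 : ‖2 * y t * (y t * conj (y t) - 1) / (1 + y t * conj (y t)) ^ 2‖ ≤ 1 := by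
      rw [norm_div, norm_pow, norm_one_add_mul_conj, norm_mul, norm_mul, Complex.norm_ofNat,
        div_le_one (by positivity)]
      have : ‖y t * conj (y t) - 1‖ ≤ n := by
        refine (norm_sub_le _ _).trans ?_
        rw [norm_mul, hyc', norm_one]; simp only [hn]; nlinarith
      calc 2 * s * ‖y t * conj (y t) - 1‖ ≤ 2 * (n / 2) * n := by gcongr
        _ = n ^ 2 := by ring
    have b2 : ‖z t * conj (y t) / (1 + y t * conj (y t))‖ ≤ ‖z t‖ := by
      rw [norm_div, norm_one_add_mul_conj, norm_mul, hyc', div_le_iff₀ hn0]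
      gcongr
      linarith
    have b3 : ‖-(2 * z t * y t * conj (y t) ^ 2 / (1 + y t * conj (y t)) ^ 2)‖ ≤ ‖z t‖ := by
      rw [norm_neg, norm_div, norm_pow, norm_one_add_mul_conj, norm_mul, norm_pow, hyc', norm_mul,
        norm_mul, Complex.norm_ofNat, div_le_iff₀ (by positivity)]
      calc 2 * ‖z t‖ * s * s ^ 2 = ‖z t‖ * (2 * s ^ 3) := by ring
        _ ≤ ‖z t‖ * n ^ 2 := by gcongr; linarith
    have b4 : ‖-(E * conj (y t) ^ 2 / (1 + y t * conj (y t)) ^ 2)‖ ≤ ‖E‖ := by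
      rw [norm_neg, norm_div, norm_pow, norm_one_add_mul_conj, norm_mul, norm_pow, hyc',
        div_le_iff₀ (by positivity)]
      gcongr
      linarith
    have b5 : ‖p t * conj (y t) ^ 3 / (1 + y t * conj (y t)) ^ 3‖
        ≤ 6 + 2 * ‖z t‖ + 2 * ‖E‖ := by
      rw [norm_div, norm_pow, norm_one_add_mul_conj, norm_mul, norm_pow, hyc']
      have : ‖p t‖ * s ^ 3 / n ^ 3 ≤ ‖p t‖ / n := by
        rw [div_le_div_iff₀ (by positivity) hn0]
        have : s ^ 3 ≤ n ^ 2 := by nlinarith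
        calc ‖p t‖ * s ^ 3 * n ≤ ‖p t‖ * n ^ 2 * n := by gcongr
          _ = ‖p t‖ * n ^ 3 := by ring
      refine this.trans ?_
      nlinarith [sq_nonneg (‖p t‖ / n - 1)]
    have b6 : ‖p t * conj (p t) / (1 + y t * conj (y t)) ^ 2‖ ≤ 5 + 2 * ‖z t‖ + 2 * ‖E‖ := by
      rw [norm_div, norm_pow, norm_one_add_mul_conj, norm_mul, RCLike.norm_conj, ← sq, ← div_pow]
      exact hP
    refine (norm_add_le _ _).trans ?_
    rw [norm_mul, norm_mul, RCLike.norm_conj, ← mul_add]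
    calc _ ≤ ‖c‖ * ((1 + ‖z t‖ + ‖z t‖ + ‖E‖ + (6 + 2 * ‖z t‖ + 2 * ‖E‖))
          + (5 + 2 * ‖z t‖ + 2 * ‖E‖)) := by
          gcongr
          exact (norm_add_le _ _).trans (add_le_add ((norm_add_le _ _).trans (add_le_add
            ((norm_add₃_le).trans (by gcongr)) b4)) b5)
      _ = ‖c‖ * (12 + 6 * ‖z t‖) + ‖c‖ * 5 * ‖E‖ := by ring
  refine hD _ ?_
  rw [hE, energy]
  simp only [map_mul, Pi.mul_apply]
  field_simp
  ring

/-- Grönwall bound: the energy of a solution at the end of a pole-free segment is bounded in terms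
of its initial value and the size of the segment. -/
theorem energy_le_of_segment {Y : ℂ → ℂ} {z₀ a : ℂ}
    (hreg : ∀ t ∈ Set.Icc (0 : ℝ) 1, AnalyticAt ℂ Y (z₀ + t * (a - z₀)) ∧
      deriv (deriv Y) (z₀ + t * (a - z₀)) = 6 * Y (z₀ + t * (a - z₀)) ^ 2 + (z₀ + t * (a - z₀)))
    {R : ℝ} (hz₀ : ‖z₀‖ ≤ R) (ha : ‖a‖ ≤ R) :
    ‖energy a (Y a) (deriv Y a)‖ ≤
      gronwallBound ‖energy z₀ (Y z₀) (deriv Y z₀)‖ (2 * R * 5) (2 * R * (12 + 6 * R)) 1 := by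
  have hline : ∀ t : ℝ, HasDerivAt (fun t : ℝ => z₀ + t * (a - z₀)) (a - z₀) t := by
    intro t
    simpa using ((Complex.ofRealCLM.hasDerivAt (x := t)).mul_const (a - z₀)).const_add z₀
  have hc : ‖a - z₀‖ ≤ 2 * R := (norm_sub_le _ _).trans (by linarith)
  have hzt : ∀ t ∈ Set.Icc (0 : ℝ) 1, ‖z₀ + t * (a - z₀)‖ ≤ R := by
    intro t ht
    have := (convex_closedBall (0 : ℂ) R).add_smul_sub_mem (mem_closedBall_zero_iff.2 hz₀)
      (mem_closedBall_zero_iff.2 ha) ht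
    simpa using this
  have hR : 0 ≤ R := (norm_nonneg _).trans ha
  have hder : ∀ t : ℝ, ∃ D : ℂ, t ∈ Set.Icc (0 : ℝ) 1 →
      HasDerivAt (fun t : ℝ => energy (z₀ + t * (a - z₀)) (Y (z₀ + t * (a - z₀)))
        (deriv Y (z₀ + t * (a - z₀)))) D t ∧
      ‖D‖ ≤ 2 * R * 5 * ‖energy (z₀ + t * (a - z₀)) (Y (z₀ + t * (a - z₀)))
        (deriv Y (z₀ + t * (a - z₀)))‖ + 2 * R * (12 + 6 * R) := by
    intro t
    by_cases ht : t ∈ Set.Icc (0 : ℝ) 1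
    · obtain ⟨han, hode⟩ := hreg t ht
      have h1 : HasDerivAt (fun t : ℝ => Y (z₀ + t * (a - z₀)))
          ((a - z₀) * deriv Y (z₀ + t * (a - z₀))) t :=
        (han.differentiableAt.hasDerivAt).scomp t (hline t)
      have h2' := han.deriv.differentiableAt.hasDerivAt.congr_deriv hode
      have h2 : HasDerivAt (fun t : ℝ => deriv Y (z₀ + t * (a - z₀)))
          ((a - z₀) * (6 * Y (z₀ + t * (a - z₀)) ^ 2 + (z₀ + t * (a - z₀)))) t :=
        (h2'.scomp t (hline t) :)
      obtain ⟨D, hD, hDb⟩ := hasDerivAt_energy (z := fun t : ℝ => z₀ + t * (a - z₀))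
        (y := fun t : ℝ => Y (z₀ + t * (a - z₀))) (p := fun t : ℝ => deriv Y (z₀ + t * (a - z₀)))
        (hline t) h1 h2
      refine ⟨D, fun _ => ⟨hD, hDb.trans ?_⟩⟩
      have hzt' := hzt t ht
      have he := norm_nonneg (energy (z₀ + t * (a - z₀)) (Y (z₀ + t * (a - z₀)))
        (deriv Y (z₀ + t * (a - z₀))))
      generalize ‖energy _ _ _‖ = e at *
      rw [add_comm]
      gcongr
    · exact ⟨0, fun h => absurd h ht⟩
  choose D hD using hder
  have := norm_le_gronwallBound_of_norm_deriv_right_le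
    (δ := ‖energy z₀ (Y z₀) (deriv Y z₀)‖)
    (fun t ht => (hD t ht).1.continuousAt.continuousWithinAt)
    (fun t ht => (hD t ⟨ht.1, ht.2.le⟩).1.hasDerivWithinAt) (by simp)
    (fun t ht => (hD t ⟨ht.1, ht.2.le⟩).2) 1 (by simp)
  simpa using this

/-! ### Local existence with uniform radius -/

/-- A solution `(y, p)` of the first-order system `y' = p`, `p' = 6y² + z` gives a regular solution. -/
theorem regularAt_of_hasDerivAt {O : Set ℂ} (hO : IsOpen O) {y p : ℂ → ℂ}
    (hy : ∀ z ∈ O, HasDerivAt y (p z) z) (hp : ∀ z ∈ O, HasDerivAt p (6 * y z ^ 2 + z) z)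
    {z : ℂ} (hz : z ∈ O) : RegularAt y z := by
  filter_upwards [hO.mem_nhds hz] with w hw
  refine ⟨DifferentiableOn.analyticAt (s := O)
    (fun v hv => (hy v hv).differentiableAt.differentiableWithinAt) (hO.mem_nhds hw), ?_⟩
  have : deriv y =ᶠ[𝓝 w] p := by
    filter_upwards [hO.mem_nhds hw] with v hv using (hy v hv).deriv
  rw [this.deriv_eq, (hp w hw).deriv]

/-- The chart at poles: with `y = u⁻²`, `w = u'` and `V = p² + p / y - 4y³ - 2zy`, the equation
becomes a polynomial system subject to the constraint `4 (w² - 1) = u⁶V + 2wu⁵ + 2zu⁴`. At a zero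
of `u` the constraint gives `w² = 1`, hence a simple zero of `u` and a double pole of `y` with
leading coefficient `1`. -/
theorem pole_chart {z₁ : ℂ} {r : ℝ} (hr : 0 < r) {u w V : ℂ → ℂ}
    (hu : ∀ z ∈ Metric.ball z₁ r, HasDerivAt u (w z) z)
    (hw : ∀ z ∈ Metric.ball z₁ r, HasDerivAt w
      (3 / 4 * u z ^ 5 * V z + 3 / 2 * w z * u z ^ 4 + z * u z ^ 3) z)
    (hV : ∀ z ∈ Metric.ball z₁ r, HasDerivAt V
      (-(V z * u z ^ 4) - 2 * w z * u z ^ 3 - z * u z ^ 2) z)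
    (h₁ : 4 * (w z₁ ^ 2 - 1) = u z₁ ^ 6 * V z₁ + 2 * w z₁ * u z₁ ^ 5 + 2 * z₁ * u z₁ ^ 4) :
    SolvesOn (fun z => (u z ^ 2)⁻¹) (Metric.ball z₁ r) ∧
    (u z₁ ≠ 0 → RegularAt (fun z => (u z ^ 2)⁻¹) z₁ ∧
      deriv (fun z => (u z ^ 2)⁻¹) z₁ = -2 * w z₁ / u z₁ ^ 3) := by
  set D := Metric.ball z₁ r with hD
  have hDo : IsOpen D := Metric.isOpen_ball
  have hz₁ : z₁ ∈ D := Metric.mem_ball_self hr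
  -- the constraint is a first integral: its defect `G` satisfies `G' = (u ^ 4 / 2) * G`
  set G : ℂ → ℂ := fun z =>
    4 * (w z ^ 2 - 1) - (u z ^ 6 * V z + 2 * w z * u z ^ 5 + 2 * z * u z ^ 4) with hG
  have hGd : ∀ z ∈ D, HasDerivAt G (u z ^ 4 / 2 * G z) z := by
    intro z hz
    have := ((((hw z hz).pow 2).sub_const 1).const_mul 4).sub
      (((((hu z hz).pow 6).mul (hV z hz)).add
        (((hw z hz).const_mul 2).mul ((hu z hz).pow 5))).add
        (((hasDerivAt_id z).const_mul 2).mul ((hu z hz).pow 4)))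
    refine HasDerivAt.congr_deriv this ?_
    simp only [hG, Pi.pow_apply, id]
    push_cast
    ring
  have hG0 : ∀ z ∈ D, G z = 0 := by
    have han : AnalyticOnNhd ℂ G D := fun z hz => DifferentiableOn.analyticAt (s := D)
      (fun v hv => (hGd v hv).differentiableAt.differentiableWithinAt) (hDo.mem_nhds hz)
    refine fun z hz => han.eqOn_zero_of_preconnected_of_eventuallyEq_zero
      (convex_ball z₁ r).isPreconnected hz₁ ?_ hz
    have hbd : ∀ᶠ z in 𝓝 z₁, ‖u z ^ 4 / 2‖ < ‖u z₁ ^ 4 / 2‖ + 1 :=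
      ((((hu z₁ hz₁).continuousAt.pow 4).div_const 2).norm).eventually_lt_const (lt_add_one _)
    refine eventually_eq_zero_of_norm_deriv_le (f' := fun z => u z ^ 4 / 2 * G z)
      (K := ‖u z₁ ^ 4 / 2‖ + 1) ?_ (sub_eq_zero.2 h₁)
    filter_upwards [hDo.mem_nhds hz₁, hbd] with z hz hz'
    refine ⟨hGd z hz, ?_⟩
    rw [norm_mul]
    gcongr
  have hucont : ContinuousOn u D := fun z hz => (hu z hz).continuousAt.continuousWithinAt
  set O : Set ℂ := D ∩ u ⁻¹' {0}ᶜ with hOdef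
  have hO : IsOpen O := hucont.isOpen_inter_preimage hDo isOpen_compl_singleton
  have hy : ∀ z ∈ O, HasDerivAt (fun z => (u z ^ 2)⁻¹) (-2 * w z / u z ^ 3) z := by
    rintro z ⟨hz, hz0 : u z ≠ 0⟩
    refine HasDerivAt.congr_deriv (((hu z hz).pow 2).inv (pow_ne_zero 2 hz0)) ?_
    simp only [Pi.pow_apply]
    field_simp
    push_cast
    ring
  have hp : ∀ z ∈ O, HasDerivAt (fun z => -2 * w z / u z ^ 3) (6 * (u z ^ 2)⁻¹ ^ 2 + z) z := by
    rintro z ⟨hz, hz0 : u z ≠ 0⟩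
    refine HasDerivAt.congr_deriv
      (((hw z hz).const_mul (-2)).div ((hu z hz).pow 3) (pow_ne_zero 3 hz0)) ?_
    have hg := hG0 z hz
    simp only [hG] at hg
    field_simp
    push_cast
    linear_combination 6 * u z ^ 2 * hg
  have hreg : ∀ z ∈ O, RegularAt (fun z => (u z ^ 2)⁻¹) z := fun z hz =>
    regularAt_of_hasDerivAt hO hy hp hz
  refine ⟨fun z hz => ?_, fun h0 => ⟨hreg z₁ ⟨hz₁, h0⟩, (hy z₁ ⟨hz₁, h0⟩).deriv⟩⟩
  by_cases hz0 : u z = 0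
  · right
    have hw1 : w z ^ 2 = 1 := by
      have hg := hG0 z hz
      simp only [hG, hz0] at hg
      linear_combination hg / 4
    have hw0 : w z ≠ 0 := by rintro h; simp [h] at hw1
    have huan : AnalyticAt ℂ u z := DifferentiableOn.analyticAt (s := D)
      (fun v hv => (hu v hv).differentiableAt.differentiableWithinAt) (hDo.mem_nhds hz)
    refine ⟨(huan.meromorphicAt.pow 2).inv, by simp [hz0], ?_, ?_⟩
    · have hs := (((hasDerivAt_iff_tendsto_slope.1 (hu z hz)).pow 2).inv₀ (pow_ne_zero 2 hw0))
      rw [hw1, inv_one] at hs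
      refine hs.congr fun v => ?_
      rw [slope_def_field, hz0, sub_zero, div_pow, inv_div, div_eq_mul_inv]
    · filter_upwards [(hu z hz).eventually_ne (c := 0) hw0,
        nhdsWithin_le_nhds (hDo.mem_nhds hz)] with v hv hvD
      exact hreg v ⟨hvD, hv⟩
  · exact Or.inl (hreg z ⟨hz, hz0⟩)

/-- A bound on the energy of the initial data gives a lower bound for the radius on which the
initial value problem has a meromorphic solution, however large the data are. For `‖y₁‖ ≤ 1` the
equation itself is solved; for `‖y₁‖ > 1` the polynomial system at poles is. -/
theorem exists_local_solution (R K : ℝ) : ∃ r > 0, ∀ z₁ y₁ p₁ : ℂ, ‖z₁‖ ≤ R →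
    ‖energy z₁ y₁ p₁‖ ≤ K → ∃ Y : ℂ → ℂ, SolvesOn Y (Metric.ball z₁ r) ∧ RegularAt Y z₁ ∧
      Y z₁ = y₁ ∧ deriv Y z₁ = p₁ := by
  set C : ℝ := 5 + 2 * R + 2 * K with hC
  set B : ℝ := 3 + K + 2 * C + R with hB
  obtain ⟨rA, hrA, hA⟩ := exists_holomorphic_solution (E := ℂ × ℂ)
    (fun q => (q.2.2, 6 * q.2.1 ^ 2 + q.1)) (by fun_prop) B
  obtain ⟨rB, hrB, hBs⟩ := exists_holomorphic_solution (E := ℂ × ℂ × ℂ)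
    (fun q => (q.2.2.1,
      3 / 4 * q.2.1 ^ 5 * q.2.2.2 + 3 / 2 * q.2.2.1 * q.2.1 ^ 4 + q.1 * q.2.1 ^ 3,
      -(q.2.2.2 * q.2.1 ^ 4) - 2 * q.2.2.1 * q.2.1 ^ 3 - q.1 * q.2.1 ^ 2)) (by fun_prop) B
  refine ⟨min rA rB, lt_min hrA hrB, fun z₁ y₁ p₁ hz₁ hE => ?_⟩
  have hR0 : 0 ≤ R := (norm_nonneg _).trans hz₁
  have hK0 : 0 ≤ K := (norm_nonneg _).trans hE
  have hC5 : 5 ≤ C := by linarith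
  have hzB : ‖z₁‖ ≤ B := by linarith
  have hp : ‖p₁‖ / (1 + ‖y₁‖ ^ 2) ≤ C := by
    have h1 : (‖p₁‖ / (1 + ‖y₁‖ ^ 2)) ^ 2 ≤ C := by
      rw [div_pow, div_le_iff₀ (by positivity)]
      refine (norm_sq_le_of_energy z₁ y₁ p₁).trans ?_
      gcongr
      linarith
    refine abs_le_of_sq_le_sq' ?_ (by linarith) |>.2
    nlinarith
  by_cases hy1 : ‖y₁‖ ≤ 1
  · have hpB : ‖p₁‖ ≤ B := by
      rw [div_le_iff₀ (by positivity)] at hp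
      have : C * (1 + ‖y₁‖ ^ 2) ≤ C * 2 := by
        gcongr
        nlinarith [norm_nonneg y₁]
      linarith
    obtain ⟨x, hx0, hx⟩ := hA z₁ (y₁, p₁) hzB (by
      rw [Prod.norm_mk]; exact max_le (by linarith) hpB)
    have h1 : ∀ z ∈ Metric.ball z₁ rA, HasDerivAt (fun z => (x z).1) (x z).2 z := fun z hz =>
      (hx z hz).fst
    have h2 : ∀ z ∈ Metric.ball z₁ rA,
      HasDerivAt (fun z => (x z).2) (6 * (x z).1 ^ 2 + z) z := fun z hz => (hx z hz).snd
    have hreg := fun z hz => regularAt_of_hasDerivAt Metric.isOpen_ball h1 h2 (z := z) hz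
    refine ⟨fun z => (x z).1,
      SolvesOn.mono (fun z hz => Or.inl (hreg z hz))
        (Metric.ball_subset_ball (min_le_left _ _)),
      hreg z₁ (Metric.mem_ball_self hrA), by simp only [hx0], ?_⟩
    rw [(h1 z₁ (Metric.mem_ball_self hrA)).deriv, hx0]
  · push Not at hy1
    have hy0 : y₁ ≠ 0 := by rintro rfl; simp at hy1; linarith
    obtain ⟨u₁, hu₁⟩ := IsAlgClosed.exists_pow_nat_eq y₁⁻¹ (n := 2) (by norm_num)
    have hu0 : u₁ ≠ 0 := by rintro rfl; simp [eq_comm, hy0] at hu₁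
    have hyu : y₁ = (u₁ ^ 2)⁻¹ := by rw [hu₁, inv_inv]
    have hun : ‖u₁‖ ≤ 1 := by
      have : ‖u₁‖ ^ 2 ≤ 1 := by
        rw [← norm_pow, hu₁, norm_inv]; exact inv_le_one_of_one_le₀ hy1.le
      exact (sq_le_one_iff₀ (norm_nonneg _)).1 this
    -- from `y = u⁻²` one gets `p = -2 * w / u ^ 3`
    set w₁ : ℂ := -p₁ * u₁ ^ 3 / 2 with hw₁
    set V₁ : ℂ := p₁ ^ 2 + p₁ / y₁ - 4 * y₁ ^ 3 - 2 * z₁ * y₁ with hV₁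
    have hVn : ‖V₁‖ ≤ K + C := by
      have e : V₁ = energy z₁ y₁ p₁ + p₁ / (1 + y₁ * (starRingEnd ℂ) y₁) / y₁ := by
        have := one_add_mul_conj_ne_zero y₁
        rw [hV₁, energy]
        field_simp
        ring
      rw [e]
      refine (norm_add_le _ _).trans (add_le_add hE ?_)
      rw [norm_div, norm_div, norm_one_add_mul_conj]
      exact (div_le_self (by positivity) hy1.le).trans hp
    have hcon : 4 * (w₁ ^ 2 - 1) = u₁ ^ 6 * V₁ + 2 * w₁ * u₁ ^ 5 + 2 * z₁ * u₁ ^ 4 := by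
      rw [hw₁, hV₁, hyu]
      field_simp
      ring
    have hwn : ‖w₁‖ ≤ B := by
      have e : w₁ ^ 2 = 1 + u₁ ^ 6 * (V₁ / 4) + w₁ / 2 * u₁ ^ 5 + z₁ / 2 * u₁ ^ 4 := by
        linear_combination hcon / 4
      have h1 : ‖w₁‖ ^ 2 ≤ 1 + (K + C) / 4 + ‖w₁‖ / 2 + R / 2 := by
        rw [← norm_pow, e]
        refine (norm_add_le _ _).trans (add_le_add ((norm_add₃_le).trans ?_) ?_)
        · rw [norm_one, norm_mul, norm_mul, norm_pow, norm_pow, norm_div, norm_div,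
            Complex.norm_ofNat, Complex.norm_ofNat]
          have h6 : ‖u₁‖ ^ 6 ≤ 1 := pow_le_one₀ (norm_nonneg _) hun
          have h5 : ‖u₁‖ ^ 5 ≤ 1 := pow_le_one₀ (norm_nonneg _) hun
          gcongr
          · calc ‖u₁‖ ^ 6 * (‖V₁‖ / 4) ≤ 1 * ((K + C) / 4) := by gcongr
              _ = _ := one_mul _
          · exact mul_le_of_le_one_right (by positivity) h5
        · rw [norm_mul, norm_pow, norm_div, Complex.norm_ofNat]
          have h4 : ‖u₁‖ ^ 4 ≤ 1 := pow_le_one₀ (norm_nonneg _) hun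
          exact (mul_le_of_le_one_right (by positivity) h4).trans (by gcongr)
      by_contra! hlt
      nlinarith
    obtain ⟨x, hx0, hx⟩ := hBs z₁ (u₁, w₁, V₁) hzB (by
      rw [Prod.norm_mk, Prod.norm_mk]
      exact max_le (by linarith) (max_le hwn (by linarith)))
    have hmain := pole_chart (u := fun z => (x z).1) (w := fun z => (x z).2.1)
      (V := fun z => (x z).2.2) hrB (fun z hz => (hx z hz).fst) (fun z hz => (hx z hz).snd.fst)
      (fun z hz => (hx z hz).snd.snd) (by rw [hx0]; exact hcon)
    simp only [hx0] at hmain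
    obtain ⟨hs, hs'⟩ := hmain
    refine ⟨fun z => ((x z).1 ^ 2)⁻¹, hs.mono (Metric.ball_subset_ball (min_le_right _ _)),
      (hs' hu0).1, by simp only [hx0]; exact hyu.symm, ?_⟩
    rw [(hs' hu0).2, hw₁]
    field_simp

/-! ### Continuation to the plane -/

theorem discreteTopology_of_not_regularAt {Y : ℂ → ℂ} {P : Set ℂ} (hY : SolvesOn Y P)
    (hP : ∀ z ∈ P, ¬ RegularAt Y z) : DiscreteTopology P := by
  rw [discreteTopology_subtype_iff]
  intro z hz
  rw [← disjoint_iff, disjoint_principal_right]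
  filter_upwards [SolvesAt.eventually_regularAt (hY z hz)] with w hw hwP
  exact hP w hwP hw

/-- Every point within `δ` of `ball z₀ ρ` is within `δ` of a point `a` of that ball for which the
segment from `z₀` to `a` contains no pole: the poles are countable, so almost every direction
avoids them. -/
theorem exists_regular_segment {Y : ℂ → ℂ} {z₀ b : ℂ} {ρ δ : ℝ} (hρ : 0 < ρ) (hδ : 0 < δ)
    (hY : SolvesOn Y (Metric.ball z₀ ρ)) (h₀ : RegularAt Y z₀) (hb : ‖b - z₀‖ < ρ + δ) :
    ∃ a ∈ Metric.ball z₀ ρ, ‖b - a‖ < δ ∧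
      ∀ t ∈ Set.Icc (0 : ℝ) 1, RegularAt Y (z₀ + t * (a - z₀)) := by
  set D := Metric.ball z₀ ρ with hD
  set P : Set ℂ := D ∩ {z | ¬ RegularAt Y z} with hP
  have hPc : P.Countable := by
    have : DiscreteTopology P :=
      discreteTopology_of_not_regularAt (fun z hz => hY z hz.1) fun z hz => hz.2
    have : Countable P := countable_of_Lindelof_of_discrete
    exact Set.to_countable P
  -- the set of admissible end points is nonempty; `z₀` itself is to be avoided
  obtain ⟨c, hc0, hcD, hcb⟩ : ∃ c : ℂ, c ≠ 0 ∧ z₀ + c ∈ D ∧ z₀ + c ∈ Metric.ball b δ := by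
    have hmem : b - z₀ ∈ Metric.ball (0 : ℂ) (ρ + δ) := by simpa using hb
    set O : Set ℂ := {c | z₀ + c ∈ D ∧ z₀ + c ∈ Metric.ball b δ} with hO
    have hOo : IsOpen O := (Metric.isOpen_ball.preimage (continuous_const_add z₀)).inter
      (Metric.isOpen_ball.preimage (continuous_const_add z₀))
    have hOne : O.Nonempty := by
      refine ⟨((ρ / (ρ + δ) : ℝ) : ℂ) * (b - z₀), ?_, ?_⟩
      · rw [hD, mem_ball_iff_norm, add_sub_cancel_left, norm_mul, Complex.norm_real,
          Real.norm_of_nonneg (by positivity), div_mul_eq_mul_div, div_lt_iff₀ (by positivity)]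
        gcongr
      · have e : z₀ + ((ρ / (ρ + δ) : ℝ) : ℂ) * (b - z₀) - b
            = -(((δ / (ρ + δ) : ℝ) : ℂ) * (b - z₀)) := by
          have : ((ρ : ℂ) + δ) ≠ 0 := by exact_mod_cast (by positivity : ρ + δ ≠ 0)
          push_cast
          field_simp
          ring
        rw [mem_ball_iff_norm, e, norm_neg, norm_mul, Complex.norm_real,
          Real.norm_of_nonneg (by positivity), div_mul_eq_mul_div, div_lt_iff₀ (by positivity)]
        gcongr
    obtain ⟨c, hc, hc0⟩ := (dense_compl_singleton (0 : ℂ)).inter_open_nonempty O hOo hOne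
    exact ⟨c, hc0, hc.1, hc.2⟩
  -- a rotated end point `z₀ + c * (1 + s * I)`: each pole excludes at most one value of `s`
  set bad : Set ℝ := (fun p : ℂ => ((p - z₀) / c).im / ((p - z₀) / c).re) '' P with hbad
  have hdense : Dense badᶜ := (hPc.image _).dense_compl ℝ
  set f : ℝ → ℂ := fun s => z₀ + c * (1 + s * Complex.I) with hf
  have hfc : Continuous f := by fun_prop
  have hf0 : f 0 = z₀ + c := by simp [hf]
  obtain ⟨s, ⟨hs1, hs2⟩, hs3⟩ := hdense.inter_open_nonempty (f ⁻¹' D ∩ f ⁻¹' Metric.ball b δ)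
    ((Metric.isOpen_ball.preimage hfc).inter (Metric.isOpen_ball.preimage hfc))
    ⟨0, by simpa [hf0] using hcD, by simpa [hf0] using hcb⟩
  refine ⟨f s, hs1, by rw [← mem_ball_iff_norm']; exact hs2, fun t ht => ?_⟩
  by_contra hcon
  have htD : z₀ + t * (f s - z₀) ∈ D := by
    have := (convex_ball z₀ ρ).add_smul_sub_mem (Metric.mem_ball_self hρ) hs1 ht
    rw [Complex.real_smul] at this
    exact this
  refine hs3 ⟨_, ⟨htD, hcon⟩, ?_⟩
  have ht0 : t ≠ 0 := by
    rintro rfl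
    exact hcon (by simpa using h₀)
  have e : (z₀ + t * (f s - z₀) - z₀) / c = t * (1 + s * Complex.I) := by
    simp only [hf]
    field_simp
    ring
  simp only [e]
  simp [ht0]

/-- A meromorphic solution on `ball z₀ ρ` with `ρ ≤ R` extends by a fixed amount `δ` that depends
only on its germ at `z₀` and on `R`. The extension is glued from the solutions on `ball a r`, where
`a` runs through end points of pole-free segments, at which the energy is bounded. -/
theorem exists_uniform_extension {y : ℂ → ℂ} {z₀ : ℂ} (hy : RegularAt y z₀) (R : ℝ) :
    ∃ δ > 0, ∀ ρ > 0, ρ ≤ R → ∀ Y : ℂ → ℂ, SolvesOn Y (Metric.ball z₀ ρ) → Y =ᶠ[𝓝 z₀] y →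
      ∃ Y' : ℂ → ℂ, SolvesOn Y' (Metric.ball z₀ (ρ + δ)) ∧ Y' =ᶠ[𝓝 z₀] y := by
  set R' : ℝ := ‖z₀‖ + R with hR'
  set K : ℝ := gronwallBound ‖energy z₀ (y z₀) (deriv y z₀)‖ (2 * R' * 5)
    (2 * R' * (12 + 6 * R')) 1 with hK
  obtain ⟨r, hr, hloc⟩ := exists_local_solution R' K
  refine ⟨r / 4, by positivity, fun ρ hρ hρR Y hY hYy => ?_⟩
  have h₀ : RegularAt Y z₀ := hy.congr hYy.symm
  have hext : ∀ b : ℂ, ∃ (a : ℂ) (Ya : ℂ → ℂ), b ∈ Metric.ball z₀ (ρ + r / 4) →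
      a ∈ Metric.ball z₀ ρ ∧ ‖b - a‖ < r / 4 ∧ SolvesOn Ya (Metric.ball a r) ∧
        ∀ z ∈ Metric.ball a r ∩ Metric.ball z₀ ρ, Ya =ᶠ[𝓝 z] Y := by
    intro b
    by_cases hb : b ∈ Metric.ball z₀ (ρ + r / 4)
    · obtain ⟨a, haD, hab, hseg⟩ := exists_regular_segment hρ (by positivity : 0 < r / 4) hY h₀
        (mem_ball_iff_norm.1 hb)
      have haR : ‖a‖ ≤ R' := by
        have := norm_le_norm_add_norm_sub' a z₀
        have := mem_ball_iff_norm.1 haD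
        linarith
      have hen := energy_le_of_segment (R := R') (fun t ht => (hseg t ht).self_of_nhds)
        (by linarith) haR
      rw [hYy.eq_of_nhds, hYy.deriv_eq] at hen
      obtain ⟨Ya, hYa, hreg, h1, h2⟩ := hloc a (Y a) (deriv Y a) haR hen
      have haY : RegularAt Y a := by simpa using hseg 1 (by simp)
      refine ⟨a, Ya, fun _ => ⟨haD, hab, hYa, ?_⟩⟩
      exact SolvesOn.eventuallyEq ((convex_ball a r).inter (convex_ball z₀ ρ)).isPreconnected
        (hYa.mono Set.inter_subset_left) (hY.mono Set.inter_subset_right)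
        ⟨Metric.mem_ball_self hr, haD⟩ (eventuallyEq_of_initial_eq hreg haY h1 h2)
    · exact ⟨0, 0, fun h => absurd h hb⟩
  choose a Ya hYa using hext
  -- `a b'` lies in the domains of `Ya b`, `Ya b'` and `Y`, so both local solutions agree with `Y`
  -- there, and hence with each other on the convex intersection of their domains
  have hagree : ∀ b ∈ Metric.ball z₀ (ρ + r / 4), ∀ b' ∈ Metric.ball z₀ (ρ + r / 4),
      ‖b' - b‖ < r / 4 → Ya b =ᶠ[𝓝 b'] Ya b' := by
    intro b hb b' hb' hbb
    obtain ⟨h1, h2, h3, h4⟩ := hYa b hb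
    obtain ⟨h1', h2', h3', h4'⟩ := hYa b' hb'
    have h5 : ‖a b' - a b‖ < 3 * r / 4 := by
      have : a b' - a b = (b' - b) + (b - a b) - (b' - a b') := by ring
      rw [this]
      refine (norm_sub_le _ _).trans_lt ?_
      linarith [norm_add_le (b' - b) (b - a b)]
    have h6 : a b' ∈ Metric.ball (a b) r := by rw [mem_ball_iff_norm]; linarith
    refine SolvesOn.eventuallyEq (D := Metric.ball (a b) r ∩ Metric.ball (a b') r)
      ((convex_ball _ _).inter (convex_ball _ _)).isPreconnected
      (h3.mono Set.inter_subset_left) (h3'.mono Set.inter_subset_right)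
      ⟨h6, Metric.mem_ball_self hr⟩
      ((h4 _ ⟨h6, h1'⟩).trans (h4' _ ⟨Metric.mem_ball_self hr, h1'⟩).symm) b' ⟨?_, ?_⟩
    · rw [mem_ball_iff_norm, ← sub_add_sub_cancel _ b]
      refine (norm_add_le _ _).trans_lt ?_
      linarith
    · rw [mem_ball_iff_norm]; linarith
  have hglue : ∀ b ∈ Metric.ball z₀ (ρ + r / 4), Ya b =ᶠ[𝓝 b] fun z => Ya z z := by
    intro b hb
    filter_upwards [Metric.isOpen_ball.mem_nhds hb,
      Metric.ball_mem_nhds b (by positivity : 0 < r / 4)] with b' hb' hbb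
    exact (hagree b hb b' hb' (mem_ball_iff_norm.1 hbb)).eq_of_nhds
  have hz₀ : z₀ ∈ Metric.ball z₀ (ρ + r / 4) := Metric.mem_ball_self (by positivity)
  refine ⟨fun z => Ya z z, fun b hb => ?_, ?_⟩
  · obtain ⟨h1, h2, h3, h4⟩ := hYa b hb
    exact (h3 b (by rw [mem_ball_iff_norm]; linarith)).congr (hglue b hb)
  · obtain ⟨h1, h2, h3, h4⟩ := hYa z₀ hz₀
    exact (hglue z₀ hz₀).symm.trans
      ((h4 z₀ ⟨by rw [mem_ball_iff_norm]; linarith, Metric.mem_ball_self hρ⟩).trans hYy)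

/-- Finitely many uniform extensions reach the ball of any prescribed radius. -/
theorem exists_solution_on_ball {y : ℂ → ℂ} {z₀ : ℂ} (hy : RegularAt y z₀) (R : ℝ) :
    ∃ Y : ℂ → ℂ, SolvesOn Y (Metric.ball z₀ R) ∧ Y =ᶠ[𝓝 z₀] y := by
  obtain ⟨ρ₀, hρ₀, hball⟩ := Metric.eventually_nhds_iff_ball.1 (eventually_eventually_nhds.2 hy)
  obtain ⟨δ, hδ, hext⟩ := exists_uniform_extension hy R
  have key : ∀ n : ℕ, ∃ ρ > 0, min R (n * δ) ≤ ρ ∧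
      ∃ Y : ℂ → ℂ, SolvesOn Y (Metric.ball z₀ ρ) ∧ Y =ᶠ[𝓝 z₀] y := by
    intro n
    induction n with
    | zero =>
      exact ⟨ρ₀, hρ₀, (min_le_right _ _).trans (by simpa using hρ₀.le), y,
        fun z hz => Or.inl (hball z hz), EventuallyEq.rfl⟩
    | succ n ih =>
      obtain ⟨ρ, hρ, hle, Y, hY, hYy⟩ := ih
      by_cases hρR : ρ ≤ R
      · refine ⟨ρ + δ, by positivity, ?_, hext ρ hρ hρR Y hY hYy⟩
        rcases min_le_iff.1 hle with h | h
        · exact (min_le_left _ _).trans (by linarith)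
        · refine (min_le_right _ _).trans ?_
          push_cast
          linarith
      · exact ⟨ρ, hρ, (min_le_left _ _).trans (not_le.1 hρR).le, Y, hY, hYy⟩
  obtain ⟨n, hn⟩ := exists_nat_ge (R / δ)
  rw [div_le_iff₀ hδ] at hn
  obtain ⟨ρ, -, hle, Y, hY, hYy⟩ := key n
  rw [min_eq_left hn] at hle
  exact ⟨Y, hY.mono (Metric.ball_subset_ball hle), hYy⟩

theorem exists_entire_solution {y : ℂ → ℂ} {z₀ : ℂ} (hy : RegularAt y z₀) :
    ∃ Y : ℂ → ℂ, SolvesOn Y Set.univ ∧ Y =ᶠ[𝓝 z₀] y := by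
  choose Y hY hYy using fun n : ℕ => exists_solution_on_ball hy (n + 1 : ℝ)
  have hagree : ∀ m n : ℕ, m ≤ n → ∀ z ∈ Metric.ball z₀ (m + 1 : ℝ), Y m =ᶠ[𝓝 z] Y n := by
    intro m n hmn
    refine SolvesOn.eventuallyEq (convex_ball _ _).isPreconnected (hY m)
      ((hY n).mono (Metric.ball_subset_ball (by gcongr)))
      (Metric.mem_ball_self (by positivity)) ((hYy m).trans (hYy n).symm)
  have hmem : ∀ z, z ∈ Metric.ball z₀ ((⌈‖z - z₀‖⌉₊ : ℕ) + 1 : ℝ) := fun z => by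
    rw [mem_ball_iff_norm]
    exact (Nat.le_ceil _).trans_lt (lt_add_one _)
  have hagree' : ∀ m n : ℕ, ∀ z ∈ Metric.ball z₀ (m + 1 : ℝ), z ∈ Metric.ball z₀ (n + 1 : ℝ) →
      Y m =ᶠ[𝓝 z] Y n := fun m n z hm hn =>
    (le_total m n).elim (fun h => hagree m n h z hm) fun h => (hagree n m h z hn).symm
  have hglue : ∀ n : ℕ, ∀ z ∈ Metric.ball z₀ (n + 1 : ℝ),
      Y n =ᶠ[𝓝 z] fun v => Y ⌈‖v - z₀‖⌉₊ v := by
    intro n z hz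
    filter_upwards [Metric.isOpen_ball.mem_nhds hz] with v hv
    exact (hagree' n _ v hv (hmem v)).eq_of_nhds
  refine ⟨fun v => Y ⌈‖v - z₀‖⌉₊ v, fun z _ => (hY _ z (hmem z)).congr (hglue _ z (hmem z)), ?_⟩
  exact (hglue 0 z₀ (Metric.mem_ball_self (by positivity))).symm.trans (hYy 0)

/-! ### The theorem -/

/-- Every local analytic solution of Painlevé I extends to a meromorphic function on all
of `ℂ` whose only singularities are double poles with leading coefficient `1`. -/
theorem painleveI_meromorphic_extension
    (U : Set ℂ) (hUopen : IsOpen U) (hUconn : IsConnected U)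
    (y : ℂ → ℂ)
    (hy : ∀ z ∈ U, AnalyticAt ℂ y z)
    (hode : ∀ z ∈ U, deriv (deriv y) z = 6 * (y z) ^ 2 + z) :
    ∃ (P : Set ℂ) (Y : ℂ → ℂ),
      IsClosed P ∧ DiscreteTopology P ∧ P ∩ U = ∅ ∧
      (∀ z ∈ U, Y z = y z) ∧
      (∀ z ∉ P, AnalyticAt ℂ Y z) ∧
      (∀ z ∉ P, deriv (deriv Y) z = 6 * (Y z) ^ 2 + z) ∧
      (∀ zp ∈ P, Filter.Tendsto (fun z => (z - zp) ^ 2 * Y z) (𝓝[≠] zp) (𝓝 1)) := by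
  obtain ⟨z₀, hz₀⟩ := hUconn.nonempty
  have hreg : ∀ z ∈ U, RegularAt y z := fun z hz => by
    filter_upwards [hUopen.mem_nhds hz] with w hw using ⟨hy w hw, hode w hw⟩
  obtain ⟨Y, hY, hYy⟩ := exists_entire_solution (hreg z₀ hz₀)
  have hYU : ∀ z ∈ U, Y =ᶠ[𝓝 z] y := SolvesOn.eventuallyEq hUconn.isPreconnected
    (hY.mono (Set.subset_univ U)) (fun z hz => Or.inl (hreg z hz)) hz₀ hYy
  refine ⟨{z | ¬ RegularAt Y z}, Y, ?_, ?_, ?_, fun z hz => (hYU z hz).eq_of_nhds,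
    fun z hz => ?_, fun z hz => ?_, fun z hz => ?_⟩
  · exact (isOpen_setOfPred_eventually_nhds
      (p := fun w => AnalyticAt ℂ Y w ∧ deriv (deriv Y) w = 6 * (Y w) ^ 2 + w)).isClosed_compl
  · exact discreteTopology_of_not_regularAt (fun z _ => hY z trivial) fun z hz => hz
  · ext z
    simp only [Set.mem_inter_iff, Set.mem_ofPred_eq, Set.mem_empty_iff_false, iff_false, not_and]
    exact fun hz hzU => hz ((hreg z hzU).congr (hYU z hzU).symm)
  · exact (not_not.1 hz).analyticAt
  · exact (not_not.1 hz).self_of_nhds.2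
  · exact ((hY z trivial).resolve_left hz).2.2.1
end

section
/- The linear equation y''(x) = (1 + h₀(x) − 1/(4x²)) y(x) on (A,∞) has two solutions y₊ and y₋ such that: y₊(x) > 0 and y₋(x) > 0 for all x > A; e^{−x} y₊(x) = 1 + O(1/x) and e^{x} y₋(x) = 1 + O(1/x) as x → +∞; the Wronskian y₋ y₊' − y₋' y₊ is constantly equal to 2; every solution y of this equation with y(x) = O(e^{−x}) as x → ∞ is a constant multiple of y₋; and the function u(t,s) = y₊(t) y₋(s) − y₋(t) y₊(s) satisfies u(t,s) > 0 whenever t > s > A. -/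
/-!
Write the equation as `y'' = (1 + p) y` with `p = h₀ - 1/(4x²)`; the bounds on `h₀` give
`|p| ≤ 1/(2x²)` on `(A, ∞)`, so `p` has `L¹` norm at most `2/9` there.

*Decaying solution.* With `y₋ = e^{-x} m` the equation becomes `m'' = 2m' + p m`, and the
normalization `m → 1` turns it into the Volterra equation
`m(x) = 1 + ∫_x^∞ (1 - e^{-2(s-x)})/2 · p(s) m(s) ds`. Its right-hand side is a contraction of ratio
`1/9` on bounded continuous functions (`exists_volterra_solution`), so `m` exists globally, with
values in `[7/8, 9/8]` and `|m - 1| ≤ 1/x` (`exists_normalized_solution`).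

*Growing solution.* Reduction of order: `y₊(x) = 2 y₋(x) ∫_A^x y₋^{-2}`. The base point can be `A`
itself since `m` is continuous and positive up to `A`. Hence `y₊ > 0` on `(A, ∞)`, the Wronskian is
`2`, and `u(t,s) = 2 y₋(t) y₋(s) ∫_s^t y₋^{-2} > 0`. As `y₋^{-2} = e^{2s} (1 + O(1/s))`, the asymptotics
follow from `abs_two_mul_integral_exp_sub_le`.

*Uniqueness.* Constancy of Wronskians (`exists_wronskian_eq`) expresses any solution as a
combination of `y₊` and `y₋`; if it is `O(e^{-x})`, multiplying by `e^{-x}` and letting `x → ∞`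
shows that the coefficient of `y₊` is zero.
-/

open Topology Filter Asymptotics

open MeasureTheory Set BoundedContinuousFunction

/-! ### The Volterra equation for the decaying solution -/

/-- The Volterra kernel `(1 - e^{-2u})/2` for `u ≥ 0`, extended by `0` to `u < 0`, so that
`∫_x^∞ (1 - e^{-2(s-x)})/2 ⋯ ds` becomes an integral over a domain independent of `x`. -/
noncomputable def volterraKernel (u : ℝ) : ℝ := (1 - Real.exp (-2 * max u 0)) / 2

lemma volterraKernel_continuous : Continuous volterraKernel := by
  unfold volterraKernel
  fun_prop

lemma abs_volterraKernel_le (u : ℝ) : |volterraKernel u| ≤ 1 / 2 := by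
  have h1 : Real.exp (-2 * max u 0) ≤ 1 := by
    rw [Real.exp_le_one_iff]
    nlinarith [le_max_right u 0]
  have h2 := Real.exp_pos (-2 * max u 0)
  unfold volterraKernel
  rw [abs_le]
  constructor <;> linarith

lemma abs_volterraKernel_mul_le {p b m c : ℝ} (u : ℝ) (hp : |p| ≤ b) (hm : |m| ≤ c) :
    ‖volterraKernel u * (p * m)‖ ≤ b * (c / 2) := by
  rw [Real.norm_eq_abs, abs_mul, abs_mul]
  have h0 : 0 ≤ b := (abs_nonneg p).trans hp
  calc |volterraKernel u| * (|p| * |m|) ≤ 1 / 2 * (b * c) := by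
        gcongr
        exact abs_volterraKernel_le u
    _ = b * (c / 2) := by ring

/-- Fixed point of the Volterra operator `m ↦ 1 + ∫ k(s - x) p(s) m(s) dμ(s)`, a contraction of
ratio `1/9` on bounded continuous functions as soon as `p` has `L¹` norm at most `2/9`. -/
lemma exists_volterra_solution (μ : Measure ℝ) (p b : ℝ → ℝ) (hpm : AEStronglyMeasurable p μ)
    (hpb : ∀ᵐ s ∂μ, |p s| ≤ b s) (hb : Integrable b μ) (hbi : ∫ s, b s ∂μ ≤ 2 / 9) :
    ∃ m : ℝ → ℝ, Continuous m ∧ (∀ x, 7 / 8 ≤ m x ∧ m x ≤ 9 / 8) ∧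
      ∀ x, m x = 1 + ∫ s, volterraKernel (s - x) * (p s * m s) ∂μ := by
  have hmeas : ∀ (f : ℝ →ᵇ ℝ) (x : ℝ),
      AEStronglyMeasurable (fun s => volterraKernel (s - x) * (p s * f s)) μ := fun f x =>
    (volterraKernel_continuous.comp
      (continuous_id.sub continuous_const)).aestronglyMeasurable.mul
      (hpm.mul f.continuous.aestronglyMeasurable)
  have hbound : ∀ (f : ℝ →ᵇ ℝ) (x : ℝ),
      ∀ᵐ s ∂μ, ‖volterraKernel (s - x) * (p s * f s)‖ ≤ b s * (‖f‖ / 2) := fun f x => by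
    filter_upwards [hpb] with s hs
    exact abs_volterraKernel_mul_le _ hs (f.norm_coe_le_norm s)
  have hint : ∀ (f : ℝ →ᵇ ℝ) (x : ℝ),
      Integrable (fun s => volterraKernel (s - x) * (p s * f s)) μ := fun f x =>
    (hb.mul_const _).mono' (hmeas f x) (hbound f x)
  have hle : ∀ (f : ℝ →ᵇ ℝ) (x : ℝ),
      ‖∫ s, volterraKernel (s - x) * (p s * f s) ∂μ‖ ≤ 1 / 9 * ‖f‖ := fun f x => by
    refine (norm_integral_le_of_norm_le (hb.mul_const _) (hbound f x)).trans ?_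
    rw [integral_mul_const]
    nlinarith [norm_nonneg f]
  have hcont : ∀ f : ℝ →ᵇ ℝ,
      Continuous fun x => 1 + ∫ s, volterraKernel (s - x) * (p s * f s) ∂μ := fun f => by
    refine continuous_const.add
      (continuous_of_dominated (hmeas f) (hbound f) (hb.mul_const _) ?_)
    refine Eventually.of_forall fun s => ?_
    exact (volterraKernel_continuous.comp (continuous_const.sub continuous_id)).mul
      continuous_const
  let T : (ℝ →ᵇ ℝ) → (ℝ →ᵇ ℝ) := fun f =>
    BoundedContinuousFunction.ofNormedAddCommGroup _ (hcont f) (1 + 1 / 9 * ‖f‖) fun x => by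
      refine (norm_add_le _ _).trans ?_
      rw [norm_one]
      gcongr
      exact hle f x
  have hT : ∀ f x, T f x = 1 + ∫ s, volterraKernel (s - x) * (p s * f s) ∂μ := fun f x => rfl
  have hK : ContractingWith (1 / 9) T := by
    refine ⟨by rw [← NNReal.coe_lt_coe]; norm_num, LipschitzWith.of_dist_le_mul fun f g => ?_⟩
    rw [BoundedContinuousFunction.dist_le (by positivity)]
    intro x
    have h := hle (f - g) x
    have e : (∫ s, volterraKernel (s - x) * (p s * (f - g) s) ∂μ) = T f x - T g x := by
      rw [hT, hT, add_sub_add_left_eq_sub, ← integral_sub (hint f x) (hint g x)]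
      congr 1
      ext s
      rw [BoundedContinuousFunction.sub_apply]
      ring
    rw [e] at h
    rw [Real.dist_eq, dist_eq_norm f g]
    simpa using h
  obtain ⟨m, hm⟩ : ∃ m, T m = m := ⟨_, hK.fixedPoint_isFixedPt⟩
  have hmx : ∀ x, m x = 1 + ∫ s, volterraKernel (s - x) * (p s * m s) ∂μ := fun x => by
    rw [← hT, hm]
  have hn : ‖m‖ ≤ 1 + 1 / 9 * ‖m‖ := by
    conv_lhs => rw [← hm]
    exact BoundedContinuousFunction.norm_ofNormedAddCommGroup_le _ (by positivity) _
  refine ⟨m, m.continuous, fun x => ?_, hmx⟩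
  have h := abs_le.1 (hle m x)
  rw [hmx x]
  constructor <;> linarith [h.1, h.2]

lemma hasDerivAt_integral_Ioi {A : ℝ} {f : ℝ → ℝ} (hc : ContinuousOn f (Ioi A))
    (hi : IntegrableOn f (Ioi A)) {x : ℝ} (hx : A < x) :
    HasDerivAt (fun x => ∫ s in Ioi x, f s) (-f x) x := by
  have h1 : HasDerivAt (fun u => ∫ s in A..u, f s) (f x) x := by
    refine intervalIntegral.integral_hasDerivAt_right ?_ ?_ (hc.continuousAt (Ioi_mem_nhds hx))
    · rw [intervalIntegrable_iff_integrableOn_Ioc_of_le hx.le]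
      exact hi.mono_set Ioc_subset_Ioi_self
    · exact hc.stronglyMeasurableAtFilter isOpen_Ioi x hx
  refine (h1.const_sub (∫ s in Ioi A, f s)).congr_of_eventuallyEq ?_
  filter_upwards [Ioi_mem_nhds hx] with u hu
  rw [← intervalIntegral.integral_interval_add_Ioi hi (hi.mono_set (Ioi_subset_Ioi (le_of_lt hu)))]
  ring

/-- Substituting `y = e^{-x} m` in `y'' = (1 + p) y` gives `m'' = 2 m' + p m`. This produces the
solution `m` normalised by `m → 1` at infinity, continuous up to and beyond the endpoint `A`. -/
lemma exists_normalized_solution {A : ℝ} (hA : 9 / 4 ≤ A) {p : ℝ → ℝ}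
    (hpc : ContinuousOn p (Ioi A)) (hpb : ∀ x > A, |p x| ≤ 1 / (2 * x ^ 2)) :
    ∃ m m₁ : ℝ → ℝ, Continuous m ∧ (∀ x, 7 / 8 ≤ m x ∧ m x ≤ 9 / 8) ∧
      (∀ x ≥ A, |m x - 1| ≤ 1 / x) ∧ (∀ x > A, HasDerivAt m (m₁ x) x) ∧
      (∀ x > A, HasDerivAt m₁ (2 * m₁ x + p x * m x) x) := by
  have hA0 : 0 < A := by linarith
  set b : ℝ → ℝ := fun s => 1 / 2 * s ^ (-2 : ℝ) with hbdef
  have hbi : ∀ x ≥ A, IntegrableOn b (Ioi x) := fun x hx =>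
    (integrableOn_Ioi_rpow_of_lt (by norm_num) (hA0.trans_le hx)).const_mul _
  have hbv : ∀ x ≥ A, ∫ s in Ioi x, b s = 1 / 2 * (1 / x) := fun x hx => by
    have hx0 : 0 < x := hA0.trans_le hx
    rw [hbdef, integral_const_mul, integral_Ioi_rpow_of_lt (by norm_num) hx0]
    norm_num [Real.rpow_neg_one]
  have hpb' : ∀ x > A, |p x| ≤ b x := fun x hx => by
    refine (hpb x hx).trans_eq ?_
    have hx0 : 0 < x := hA0.trans hx
    rw [hbdef]
    simp only
    rw [Real.rpow_neg hx0.le, Real.rpow_two]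
    field_simp
  obtain ⟨m, hmc, hmb, hm⟩ := exists_volterra_solution (volume.restrict (Ioi A)) p b
    (hpc.aestronglyMeasurable measurableSet_Ioi)
    ((ae_restrict_iff' measurableSet_Ioi).2 (Eventually.of_forall hpb')) (hbi A le_rfl) (by
      rw [hbv A le_rfl]
      have : 1 / A ≤ 1 / (9 / 4) := one_div_le_one_div_of_le (by norm_num) hA
      norm_num at this ⊢
      linarith)
  have hmabs : ∀ x, |m x| ≤ 9 / 8 := fun x =>
    abs_le.2 ⟨by linarith [(hmb x).1], (hmb x).2⟩
  have hfm : AEStronglyMeasurable (fun s => p s * m s) (volume.restrict (Ioi A)) :=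
    (hpc.aestronglyMeasurable measurableSet_Ioi).mul hmc.aestronglyMeasurable
  have hfc : ContinuousOn (fun s => p s * m s) (Ioi A) := hpc.mul hmc.continuousOn
  have hfi : IntegrableOn (fun s => p s * m s) (Ioi A) := by
    refine ((hbi A le_rfl).mul_const (9 / 8)).mono' hfm ?_
    refine (ae_restrict_iff' measurableSet_Ioi).2 (Eventually.of_forall fun s hs => ?_)
    rw [Real.norm_eq_abs, abs_mul]
    exact mul_le_mul (hpb' s hs) (hmabs s) (abs_nonneg _) ((abs_nonneg _).trans (hpb' s hs))
  have hgc : ContinuousOn (fun s => Real.exp (-2 * s) * (p s * m s)) (Ioi A) :=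
    (by fun_prop : Continuous fun s : ℝ => Real.exp (-2 * s)).continuousOn.mul hfc
  have hgi : IntegrableOn (fun s => Real.exp (-2 * s) * (p s * m s)) (Ioi A) := by
    refine Integrable.bdd_mul (c := 1) hfi
      (by fun_prop : Continuous fun s : ℝ => Real.exp (-2 * s)).aestronglyMeasurable ?_
    refine (ae_restrict_iff' measurableSet_Ioi).2 (Eventually.of_forall fun s hs => ?_)
    rw [Real.norm_eq_abs, Real.abs_exp, Real.exp_le_one_iff]
    have : A < s := hs
    linarith
  -- The kernel vanishes for `s ≤ x`, so only the tail `(x, ∞)` contributes.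
  have hmt : ∀ x ≥ A, m x = 1 + ∫ s in Ioi x, volterraKernel (s - x) * (p s * m s) := by
    intro x hx
    rw [hm x]
    congr 1
    refine setIntegral_eq_of_subset_of_forall_sdiff_eq_zero measurableSet_Ioi
      (Ioi_subset_Ioi hx) fun s hs => ?_
    have : s - x ≤ 0 := by
      have := hs.2
      rw [mem_Ioi, not_lt] at this
      linarith
    simp [volterraKernel, max_eq_right this]
  have hms : ∀ x ≥ A, m x = 1 + (1 / 2 * ∫ s in Ioi x, p s * m s)
      - 1 / 2 * Real.exp (2 * x) * ∫ s in Ioi x, Real.exp (-2 * s) * (p s * m s) := by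
    intro x hx
    rw [hmt x hx, ← integral_const_mul, ← integral_const_mul, add_sub_assoc, ← integral_sub
      ((hfi.mono_set (Ioi_subset_Ioi hx)).const_mul _)
      ((hgi.mono_set (Ioi_subset_Ioi hx)).const_mul _)]
    congr 1
    refine setIntegral_congr_fun measurableSet_Ioi fun s hs => ?_
    have hs' : 0 ≤ s - x := by
      have : x < s := hs
      linarith
    have he : Real.exp (-2 * (s - x)) = Real.exp (2 * x) * Real.exp (-2 * s) := by
      rw [← Real.exp_add]
      ring_nf
    simp only [volterraKernel, max_eq_left hs', he]
    ring
  have hE : ∀ x : ℝ, HasDerivAt (fun x => Real.exp (2 * x)) (2 * Real.exp (2 * x)) x := fun x => by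
    simpa [mul_comm] using ((hasDerivAt_id x).const_mul 2).exp
  have hEE : ∀ x : ℝ, Real.exp (2 * x) * Real.exp (-2 * x) = 1 := fun x => by
    rw [← Real.exp_add]
    simp
  refine ⟨m, fun x => -(Real.exp (2 * x) *
    ∫ s in Ioi x, Real.exp (-2 * s) * (p s * m s)), hmc, hmb, fun x hx => ?_,
    fun x hx => ?_, fun x hx => ?_⟩
  · rw [hmt x hx, add_sub_cancel_left, ← Real.norm_eq_abs]
    have hx0 : 0 < x := hA0.trans_le hx
    refine (norm_integral_le_of_norm_le ((hbi x hx).mul_const (9 / 8 / 2)) ?_).trans ?_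
    · refine (ae_restrict_iff' measurableSet_Ioi).2 (Eventually.of_forall fun s hs => ?_)
      exact abs_volterraKernel_mul_le _ (hpb' s (lt_of_le_of_lt hx hs)) (hmabs s)
    · rw [integral_mul_const, hbv x hx]
      have : 0 < 1 / x := by positivity
      linarith
  · have h := (((hasDerivAt_integral_Ioi hfc hfi hx).const_mul (1 / 2)).const_add 1).sub
      (((hE x).const_mul (1 / 2)).mul (hasDerivAt_integral_Ioi hgc hgi hx))
    refine (h.congr_of_eventuallyEq ?_).congr_deriv ?_
    · filter_upwards [Ioi_mem_nhds hx] with u hu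
      exact hms u (le_of_lt hu)
    · linear_combination 1 / 2 * (p x * m x) * hEE x
  · refine ((hE x).mul (hasDerivAt_integral_Ioi hgc hgi hx)).neg.congr_deriv ?_
    linear_combination (p x * m x) * hEE x

/-! ### Growth of the second solution -/

/-- L'Hôpital-type estimate: `(e^{2x}/x)' ≥ e^{2x}/x` for `x ≥ 1`, so a multiple of `e^{2x}/x`
absorbs both the contribution of `g - 1` and the boundary term at `A`. -/
lemma abs_two_mul_integral_exp_sub_le {A C : ℝ} (hA : 1 ≤ A) (hC : 0 ≤ C) {g : ℝ → ℝ}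
    (hg : Continuous g) (hgb : ∀ x ≥ A, |g x - 1| ≤ C / x) {x : ℝ} (hx : A ≤ x) :
    |2 * (∫ s in A..x, Real.exp (2 * s) * g s) - Real.exp (2 * x)|
      ≤ (2 * C + A) * (Real.exp (2 * x) / x) := by
  have hE : ∀ x : ℝ, HasDerivAt (fun x => Real.exp (2 * x)) (2 * Real.exp (2 * x)) x := fun x => by
    simpa [mul_comm] using ((hasDerivAt_id x).const_mul 2).exp
  set D : ℝ → ℝ := fun x => 2 * (∫ s in A..x, Real.exp (2 * s) * g s) - Real.exp (2 * x)
  set Φ : ℝ → ℝ := fun x => (2 * C + A) * (Real.exp (2 * x) / x)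
  have hgc : Continuous fun s => Real.exp (2 * s) * g s := by fun_prop
  have hD : ∀ x, HasDerivAt D (2 * Real.exp (2 * x) * (g x - 1)) x := fun x => by
    have h1 : HasDerivAt (fun u => ∫ s in A..u, Real.exp (2 * s) * g s)
        (Real.exp (2 * x) * g x) x :=
      Continuous.deriv_integral _ hgc A x ▸
        (intervalIntegral.differentiable_integral_of_continuous hgc x).hasDerivAt
    refine ((h1.const_mul 2).sub (hE x)).congr_deriv ?_
    ring
  have hΦ : ∀ x ≥ A, HasDerivAt Φ ((2 * C + A) *
      ((2 * Real.exp (2 * x) * x - Real.exp (2 * x) * 1) / x ^ 2)) x := fun x hx =>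
    ((hE x).div (hasDerivAt_id x) (by simp only [id]; linarith)).const_mul _
  have hΦD : ∀ x ≥ A, |2 * Real.exp (2 * x) * (g x - 1)| ≤ (2 * C + A) *
      ((2 * Real.exp (2 * x) * x - Real.exp (2 * x) * 1) / x ^ 2) := fun x hx => by
    have hx0 : 0 < x := by linarith
    have he := Real.exp_pos (2 * x)
    rw [abs_mul, abs_of_pos (by positivity)]
    calc 2 * Real.exp (2 * x) * |g x - 1| ≤ 2 * Real.exp (2 * x) * (C / x) := by
          gcongr
          exact hgb x hx
      _ = (2 * C) * (Real.exp (2 * x) * x / x ^ 2) := by field_simp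
      _ ≤ _ := by
          gcongr
          · linarith
          · nlinarith
  have hmono : ∀ ε : ℝ, |ε| = 1 → 0 ≤ Φ x + ε * D x := fun ε hε => by
    have hder : ∀ y ≥ A, HasDerivAt (fun y => Φ y + ε * D y) _ y := fun y hy =>
      (hΦ y hy).add ((hD y).const_mul ε)
    have h : MonotoneOn (fun y => Φ y + ε * D y) (Ici A) := by
      refine monotoneOn_of_deriv_nonneg (convex_Ici A)
        (fun y hy => (hder y hy).continuousAt.continuousWithinAt) (fun y hy => ?_) fun y hy => ?_
      · exact (hder y (interior_subset hy)).differentiableAt.differentiableWithinAt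
      · rw [(hder y (interior_subset hy)).deriv]
        have h1 := hΦD y (interior_subset hy)
        have h2 := neg_abs_le (ε * (2 * Real.exp (2 * y) * (g y - 1)))
        rw [abs_mul, hε, one_mul] at h2
        linarith
    refine le_trans ?_ (h self_mem_Ici hx hx)
    have he := Real.exp_pos (2 * A)
    have hA0 : 0 < A := by linarith
    have hDA : D A = -Real.exp (2 * A) := by simp [D]
    have hΦA : Real.exp (2 * A) ≤ Φ A := by
      have : Φ A = Real.exp (2 * A) + 2 * C * (Real.exp (2 * A) / A) := by
        simp only [Φ]
        field_simp
        ring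
      rw [this]
      have : 0 ≤ 2 * C * (Real.exp (2 * A) / A) := by positivity
      linarith
    have h3 := neg_abs_le (ε * D A)
    rw [abs_mul, hε, one_mul, hDA, abs_neg, abs_of_pos he] at h3
    simp only
    rw [hDA]
    linarith
  have h1 := hmono 1 (by simp)
  have h2 := hmono (-1) (by simp)
  change |D x| ≤ Φ x
  rw [abs_le]
  constructor <;> linarith

/-! ### Wronskians -/

/-- The Wronskian of two solutions of `y'' = q y` on `(A, ∞)` is constant. -/
lemma exists_wronskian_eq {A : ℝ} {q y y₁ z z₁ : ℝ → ℝ}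
    (hy : ∀ x > A, HasDerivAt y (y₁ x) x) (hy₁ : ∀ x > A, HasDerivAt y₁ (q x * y x) x)
    (hz : ∀ x > A, HasDerivAt z (z₁ x) x) (hz₁ : ∀ x > A, HasDerivAt z₁ (q x * z x) x) :
    ∃ w : ℝ, ∀ x > A, y x * z₁ x - y₁ x * z x = w := by
  have hd : ∀ x > A, HasDerivAt (fun x => y x * z₁ x - y₁ x * z x) 0 x := fun x hx =>
    (((hy x hx).mul (hz₁ x hx)).sub ((hy₁ x hx).mul (hz x hx))).congr_deriv (by ring)
  refine ⟨y (A + 1) * z₁ (A + 1) - y₁ (A + 1) * z (A + 1), fun x hx => ?_⟩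
  exact isOpen_Ioi.is_const_of_deriv_eq_zero isPreconnected_Ioi
    (fun u hu => (hd u hu).differentiableAt.differentiableWithinAt)
    (fun u hu => (hd u hu).deriv) hx (by simp : A + 1 ∈ Ioi A)

lemma deriv_of_hasDerivAt {A : ℝ} {q y y₁ : ℝ → ℝ}
    (hy : ∀ x > A, HasDerivAt y (y₁ x) x) (hy₁ : ∀ x > A, HasDerivAt y₁ (q x * y x) x) :
    ∀ x > A, DifferentiableAt ℝ y x ∧ DifferentiableAt ℝ (deriv y) x ∧
      deriv (deriv y) x = q x * y x := fun x hx => by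
  have he : deriv y =ᶠ[𝓝 x] y₁ := by
    filter_upwards [Ioi_mem_nhds hx] with u hu
    exact (hy u hu).deriv
  have h := (hy₁ x hx).congr_of_eventuallyEq he
  exact ⟨(hy x hx).differentiableAt, h.differentiableAt, h.deriv⟩

/-! ### The fundamental system -/

/-- The linearized equation `y'' = (1 + h₀(x) - 1/(4x²)) y` on `(A, ∞)` has solutions
`y₊, y₋`, positive on `(A, ∞)`, with `e^{∓x} y_± = 1 + O(1/x)`, Wronskian
`y₋ y₊' - y₋' y₊ = 2`; every solution that is `O(e^{-x})` is a multiple of `y₋`; and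
`u(t,s) = y₊(t) y₋(s) - y₋(t) y₊(s) > 0` for `t > s > A`. -/
theorem eq13_linearized_solutions
    (A : ℝ) (hA : 9/4 ≤ A)
    (h₀ : ℝ → ℝ)
    (hh₀d : ∀ x > A, DifferentiableAt ℝ h₀ x ∧ DifferentiableAt ℝ (deriv h₀) x)
    (hh₀e : ∀ x > A, deriv (deriv h₀) x + deriv h₀ x / x - h₀ x - (h₀ x) ^ 2 / 2
        - 392 / (625 * x ^ 4) = 0)
    (hh₀b : ∀ x > A, -(1 / x ^ 4) < h₀ x ∧ h₀ x < -(392/625) * (1 / x ^ 4)) :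
    ∃ yp ym : ℝ → ℝ,
      (∀ x > A, DifferentiableAt ℝ yp x ∧ DifferentiableAt ℝ (deriv yp) x ∧
        deriv (deriv yp) x = (1 + h₀ x - 1 / (4 * x ^ 2)) * yp x) ∧
      (∀ x > A, DifferentiableAt ℝ ym x ∧ DifferentiableAt ℝ (deriv ym) x ∧
        deriv (deriv ym) x = (1 + h₀ x - 1 / (4 * x ^ 2)) * ym x) ∧
      (∀ x > A, 0 < yp x ∧ 0 < ym x) ∧
      ((fun x => Real.exp (-x) * yp x - 1) =O[atTop] fun x => 1 / x) ∧
      ((fun x => Real.exp x * ym x - 1) =O[atTop] fun x => 1 / x) ∧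
      (∀ x > A, ym x * deriv yp x - deriv ym x * yp x = 2) ∧
      (∀ y : ℝ → ℝ,
        (∀ x > A, DifferentiableAt ℝ y x ∧ DifferentiableAt ℝ (deriv y) x ∧
          deriv (deriv y) x = (1 + h₀ x - 1 / (4 * x ^ 2)) * y x) →
        ((fun x => y x) =O[atTop] fun x => Real.exp (-x)) →
        ∃ c : ℝ, ∀ x > A, y x = c * ym x) ∧
      (∀ t s : ℝ, A < s → s < t → 0 < yp t * ym s - ym t * yp s) := by
  have hA0 : 0 < A := by linarith
  obtain ⟨m, m₁, hmc, hmb, hm1, hm, hm₁⟩ :=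
    exists_normalized_solution hA (p := fun x => h₀ x - 1 / (4 * x ^ 2))
      (fun x hx => ContinuousAt.continuousWithinAt (by
        have hx0 : 4 * x ^ 2 ≠ 0 := by
          have : A < x := hx
          have : 0 < x := by linarith
          positivity
        have := (hh₀d x hx).1.continuousAt
        fun_prop (disch := assumption)))
      (fun x hx => by
        have hx0 : 0 < x := by linarith
        obtain ⟨h1, h2⟩ := hh₀b x hx
        have e1 : 0 < 1 / x ^ 4 := by positivity
        have e2 : 1 / x ^ 4 ≤ 1 / (4 * x ^ 2) := by
          apply one_div_le_one_div_of_le (by positivity)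
          have h4 : 4 ≤ x ^ 2 := by nlinarith
          nlinarith [mul_le_mul_of_nonneg_right h4 (sq_nonneg x)]
        have e3 : 1 / (2 * x ^ 2) = 2 * (1 / (4 * x ^ 2)) := by
          field_simp
          norm_num
        rw [abs_le]
        constructor <;> linarith)
  have hmpos : ∀ x, 0 < m x := fun x => by linarith [(hmb x).1]
  have hmne : ∀ x, m x ≠ 0 := fun x => (hmpos x).ne'
  have hee : ∀ x : ℝ, Real.exp x * Real.exp (-x) = 1 := fun x => by
    rw [← Real.exp_add]
    simp
  have hE2 : ∀ x : ℝ, Real.exp (2 * x) = Real.exp x * Real.exp x := fun x => by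
    rw [← Real.exp_add]
    ring_nf
  have hEn : ∀ x : ℝ, HasDerivAt (fun x => Real.exp (-x)) (-Real.exp (-x)) x := fun x => by
    simpa using (hasDerivAt_neg x).exp
  set q : ℝ → ℝ := fun x => 1 + h₀ x - 1 / (4 * x ^ 2) with hq
  -- The decaying solution.
  set ym : ℝ → ℝ := fun x => Real.exp (-x) * m x with hym
  set ym₁ : ℝ → ℝ := fun x => Real.exp (-x) * (m₁ x - m x) with hym₁
  have hdm : ∀ x > A, HasDerivAt ym (ym₁ x) x := fun x hx =>
    ((hEn x).mul (hm x hx)).congr_deriv (by simp only [hym₁]; ring)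
  have hdm₁ : ∀ x > A, HasDerivAt ym₁ (q x * ym x) x := fun x hx =>
    ((hEn x).mul ((hm₁ x hx).sub (hm x hx))).congr_deriv (by simp only [hym, hq, Pi.sub_apply]; ring)
  have hympos : ∀ x, 0 < ym x := fun x => mul_pos (Real.exp_pos _) (hmpos x)
  -- The growing solution, by reduction of order: `1 / ym² = e^{2s} / m²`.
  set g : ℝ → ℝ := fun x => 1 / m x ^ 2 with hgdef
  have hgc : Continuous g := continuous_const.div₀ (hmc.pow 2) fun x => pow_ne_zero 2 (hmne x)
  set I : ℝ → ℝ := fun x => ∫ s in A..x, Real.exp (2 * s) * g s with hI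
  have hIc : Continuous fun s => Real.exp (2 * s) * g s := by fun_prop
  have hgpos : ∀ s, 0 < Real.exp (2 * s) * g s := fun s =>
    mul_pos (Real.exp_pos _) (one_div_pos.2 (pow_pos (hmpos s) 2))
  have hId : ∀ x, HasDerivAt I (Real.exp (2 * x) * g x) x := fun x =>
    Continuous.deriv_integral _ hIc A x ▸
      (intervalIntegral.differentiable_integral_of_continuous hIc x).hasDerivAt
  have hgy : ∀ x, ym x ^ 2 * (Real.exp (2 * x) * g x) = 1 := fun x => by
    have h1 := hmne x
    have h2 := hee x
    simp only [hym, hgdef, hE2]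
    field_simp
    linear_combination (Real.exp x * Real.exp (-x) + 1) * h2
  have hIy : ∀ x, Real.exp (2 * x) * g x = 1 / ym x ^ 2 := fun x => by
    have := (hympos x).ne'
    rw [eq_div_iff (pow_ne_zero 2 this)]
    linear_combination hgy x
  set yp : ℝ → ℝ := fun x => 2 * (ym x * I x) with hyp
  set yp₁ : ℝ → ℝ := fun x => 2 * (ym₁ x * I x + 1 / ym x) with hyp₁
  have hdp : ∀ x > A, HasDerivAt yp (yp₁ x) x := fun x hx =>
    (((hdm x hx).mul (hId x)).const_mul 2).congr_deriv (by
      have := (hympos x).ne'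
      simp only [hyp₁]
      rw [hIy]
      field_simp)
  have hdp₁ : ∀ x > A, HasDerivAt yp₁ (q x * yp x) x := fun x hx =>
    ((((hdm₁ x hx).mul (hId x)).add
      ((hasDerivAt_const x (1 : ℝ)).div (hdm x hx) (hympos x).ne')).const_mul 2).congr_deriv (by
      have := (hympos x).ne'
      simp only [hyp]
      rw [hIy]
      field_simp
      ring)
  have hIpos : ∀ s t, s < t → A ≤ s → I s < I t := fun s t hst hs => by
    have h := intervalIntegral.intervalIntegral_pos_of_pos
      (hIc.intervalIntegrable s t) hgpos hst
    have h2 := intervalIntegral.integral_add_adjacent_intervals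
      (hIc.intervalIntegrable (μ := volume) A s) (hIc.intervalIntegrable s t)
    simp only [hI]
    linarith
  have hIA : I A = 0 := by simp [hI]
  have hyppos : ∀ x > A, 0 < yp x := fun x hx => by
    have h1 := hIpos A x hx le_rfl
    rw [hIA] at h1
    exact mul_pos two_pos (mul_pos (hympos x) h1)
  have hgb : ∀ x ≥ A, |g x - 1| ≤ 3 / x := fun x hx => by
    obtain ⟨h1, h2⟩ := hmb x
    have e : g x - 1 = (1 - m x) * ((1 + m x) / m x ^ 2) := by
      have := hmne x
      simp only [hgdef]
      field_simp
      ring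
    have e2 : (1 + m x) / m x ^ 2 ≤ 3 := by
      rw [div_le_iff₀ (pow_pos (hmpos x) 2)]
      nlinarith
    have e3 : 0 ≤ (1 + m x) / m x ^ 2 := by
      have := hmpos x
      positivity
    rw [e, abs_mul, abs_of_nonneg e3, abs_sub_comm]
    calc |m x - 1| * ((1 + m x) / m x ^ 2) ≤ 1 / x * 3 :=
          mul_le_mul (hm1 x hx) e2 e3 (by have := hA0.trans_le hx; positivity)
      _ = 3 / x := by ring
  have hasym : (fun x => Real.exp x * ym x - 1) =O[atTop] fun x => 1 / x := by
    refine IsBigO.of_bound 1 ?_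
    filter_upwards [eventually_ge_atTop A] with x hx
    have e : Real.exp x * ym x = m x := by
      simp only [hym]
      linear_combination m x * hee x
    have hx0 : 0 < x := hA0.trans_le hx
    rw [e, one_mul, Real.norm_of_nonneg (by positivity : 0 ≤ 1 / x)]
    exact hm1 x hx
  have hasyp : (fun x => Real.exp (-x) * yp x - 1) =O[atTop] fun x => 1 / x := by
    refine IsBigO.of_bound (9 / 8 * (2 * 3 + A) + 1) ?_
    filter_upwards [eventually_ge_atTop A] with x hx
    have hx0 : 0 < x := hA0.trans_le hx
    have h1 := abs_two_mul_integral_exp_sub_le (by linarith) (by norm_num) hgc hgb hx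
    have e : Real.exp (-x) * yp x - 1 = m x * (Real.exp (-x) * Real.exp (-x)) *
        (2 * (∫ s in A..x, Real.exp (2 * s) * g s) - Real.exp (2 * x)) + (m x - 1) := by
      simp only [hyp, hym, hI, hE2 x]
      linear_combination (m x * (Real.exp x * Real.exp (-x) + 1)) * hee x
    have hp : 0 < m x * (Real.exp (-x) * Real.exp (-x)) := by
      have := hmpos x
      positivity
    rw [e, Real.norm_of_nonneg (by positivity : 0 ≤ 1 / x), add_mul, one_mul]
    refine (norm_add_le _ _).trans (add_le_add ?_ (hm1 x hx))
    rw [Real.norm_eq_abs, abs_mul, abs_of_pos hp]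
    calc _ ≤ m x * (Real.exp (-x) * Real.exp (-x)) * ((2 * 3 + A) * (Real.exp (2 * x) / x)) :=
          mul_le_mul_of_nonneg_left h1 hp.le
      _ = m x * ((2 * 3 + A) * (1 / x)) := by
          rw [hE2]
          field_simp
          linear_combination m x * (Real.exp x * Real.exp (-x) + 1) * hee x
      _ ≤ 9 / 8 * ((2 * 3 + A) * (1 / x)) :=
          mul_le_mul_of_nonneg_right (hmb x).2 (by positivity)
      _ = _ := by ring
  have hwr : ∀ x > A, ym x * yp₁ x - ym₁ x * yp x = 2 := fun x hx => by
    have := (hympos x).ne'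
    simp only [hyp, hyp₁]
    field_simp
    ring
  refine ⟨yp, ym, deriv_of_hasDerivAt hdp hdp₁, deriv_of_hasDerivAt hdm hdm₁,
    fun x hx => ⟨hyppos x hx, hympos x⟩, hasyp, hasym, fun x hx => ?_, fun y hy hyO => ?_,
    fun t s hs hst => ?_⟩
  · rw [(hdp x hx).deriv, (hdm x hx).deriv]
    exact hwr x hx
  · have hyd : ∀ x > A, HasDerivAt y (deriv y x) x := fun x hx => (hy x hx).1.hasDerivAt
    have hyd₁ : ∀ x > A, HasDerivAt (deriv y) (q x * y x) x := fun x hx =>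
      (hy x hx).2.1.hasDerivAt.congr_deriv (hy x hx).2.2
    obtain ⟨w, hw⟩ := exists_wronskian_eq hdm hdm₁ hyd hyd₁
    obtain ⟨v, hv⟩ := exists_wronskian_eq hdp hdp₁ hyd hyd₁
    have hrep : ∀ x > A, 2 * y x = w * yp x - v * ym x := fun x hx => by
      rw [← hw x hx, ← hv x hx, ← hwr x hx]
      ring
    -- Multiply by `e^{-x}` and let `x → ∞`: only the coefficient of `yp` survives.
    have hinv : Tendsto (fun x : ℝ => 1 / x) atTop (𝓝 0) := by
      simpa using tendsto_inv_atTop_zero (𝕜 := ℝ)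
    have hexp : Tendsto (fun x : ℝ => Real.exp (-x)) atTop (𝓝 0) :=
      Real.tendsto_exp_comp_nhds_zero.2 tendsto_neg_atTop_atBot
    have l1 : Tendsto (fun x => Real.exp (-x) * yp x) atTop (𝓝 1) := by
      simpa using (hasyp.trans_tendsto hinv).add_const 1
    have l2 : Tendsto (fun x => Real.exp x * ym x) atTop (𝓝 1) := by
      simpa using (hasym.trans_tendsto hinv).add_const 1
    have l3 : Tendsto (fun x => Real.exp (-x) * ym x) atTop (𝓝 0) := by
      have := (hexp.mul hexp).mul l2
      simp only [zero_mul] at this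
      refine this.congr fun x => ?_
      linear_combination (Real.exp (-x) * ym x) * hee x
    have l4 : Tendsto (fun x => Real.exp (-x) * y x) atTop (𝓝 0) := by
      simpa using hexp.mul (hyO.trans_tendsto hexp)
    have l5 := ((l1.const_mul w).sub (l3.const_mul v)).sub (l4.const_mul 2)
    have l6 : Tendsto (fun _ : ℝ => (0 : ℝ)) atTop (𝓝 (w * 1 - v * 0 - 2 * 0)) := by
      refine l5.congr' ?_
      filter_upwards [eventually_gt_atTop A] with x hx
      linear_combination (-Real.exp (-x)) * hrep x hx
    have hw0 : w = 0 := by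
      have := tendsto_nhds_unique l6 tendsto_const_nhds
      linarith
    refine ⟨-v / 2, fun x hx => ?_⟩
    have := hrep x hx
    rw [hw0] at this
    linarith
  · have h := mul_pos (mul_pos (hympos t) (hympos s)) (sub_pos.2 (hIpos s t hst hs.le))
    simp only [hyp]
    linarith
end
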